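/- arXiv:2512.02661 — 2 statements merged into one kernel-verified Lean document; each statement's English description precedes it below -/
import Mathlib

section
/- For every γ ∈ (0,1) there exists a constant c > 0 depending only on γ such that the following holds. Let W be a standard planar Brownian motion. Then for every R > 0, every y ∈ ℝ² with ‖y‖ ≤ R, and every ε with 0 < ε ≤ γR/2, the probability that simultaneously W_{R²} ∈ B(y, ε) and ‖W_t − (t/R²)·y‖ ≤ γR for all t ∈ [0, R²] is at least c·(ε/R)². -/
open MeasureTheory ProbabilityTheory Real

/-- The centered Gaussian measure on the Euclidean plane with covariance matrix `v • Id₂`,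
defined via its density with respect to the Lebesgue measure. -/
noncomputable def gaussianPlane (v : ℝ) : Measure (EuclideanSpace ℝ (Fin 2)) :=
  volume.withDensity fun z => ENNReal.ofReal ((2 * π * v)⁻¹ * Real.exp (-‖z‖ ^ 2 / (2 * v)))

/-- `W` is a standard planar Brownian motion on the probability space `Ω`: it starts at `0`,
has a.s. continuous paths, and for `0 ≤ s ≤ t` the increment `W t - W s` is a centered
Gaussian vector with covariance `(t - s) • Id₂`, independent of the σ-algebra generated
by `(W u)_{0 ≤ u ≤ s}`. -/
structure IsPlanarBM {Ω : Type*} [MeasureSpace Ω]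
    (W : ℝ → Ω → EuclideanSpace ℝ (Fin 2)) : Prop where
  measurable : ∀ t : ℝ, Measurable (W t)
  init : ∀ᵐ ω : Ω, W 0 ω = 0
  cont : ∀ᵐ ω : Ω, Continuous fun t => W t ω
  incr_law : ∀ s t : ℝ, 0 ≤ s → s < t →
    Measure.map (fun ω => W t ω - W s ω) ℙ = gaussianPlane (t - s)
  incr_indep : ∀ s t : ℝ, 0 ≤ s → s ≤ t →
    Indep (MeasurableSpace.comap (fun ω => W t ω - W s ω) inferInstance)
      (⨆ u ∈ Set.Icc (0 : ℝ) s, MeasurableSpace.comap (W u) inferInstance) ℙ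

/-!
Follow the uniform motion `t ↦ t • v`, `v = y / R²`, in steps of duration `r²`, with `r` a small
multiple of `R`. Suppose that at the start of a step `W` is within `r` of a point `a`, and let `b`
be a target within `r` of `a`.

* `W` ends the step in `B(b, ε)` with probability at least `e^{-9/2} / 2 * (ε / r)²`, because the
  increment only has to have norm at most `3r`.
* If `W` leaves `B(a, 6r)` first, then at the moment it does so it still has to move by at least
  `4r` in the remaining time `u ≤ r²`. The Gaussian density at distance `4r` increases with
  `u ≤ r²`, so this has probability at most `e^{-8} / 2 * (ε / r)²`.

The difference is a positive multiple of `(ε / r)²`. Using `ε = r` for all the steps but the last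
costs only a constant factor, since the number of steps depends only on `R / r`.
-/

open Metric Set

section General

lemma exp_neg_div_div_le_of_le {a u v : ℝ} (hu : 0 < u) (huv : u ≤ v) (hva : v ≤ a) :
    exp (-a / u) / u ≤ exp (-a / v) / v := by
  have hv : 0 < v := hu.trans_le huv
  have hexponent : v / u - 1 ≤ a / u - a / v := by
    calc v / u - 1 = 1 * (v / u - 1) := (one_mul _).symm
      _ ≤ a / v * (v / u - 1) := by
          gcongr
          · exact sub_nonneg.2 ((one_le_div hu).2 huv)
          · exact (one_le_div hv).2 hva
      _ = a / u - a / v := by field_simp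
  have hratio : v / u ≤ exp (a / u - a / v) := by
    linarith [add_one_le_exp (a / u - a / v)]
  calc exp (-a / u) / u = v / u * exp (-a / u) / v := by field_simp
    _ ≤ exp (a / u - a / v) * exp (-a / u) / v := by gcongr
    _ = exp (-a / v) / v := by rw [← exp_add]; ring_nf

lemma div_mul_le_min_div {a r ε : ℝ} (ha : 1 ≤ a) (hr : 0 < r) (hε : 0 ≤ ε) (hεr : ε ≤ a * r) :
    ε / (a * r) ≤ min ε r / r := by
  have ha0 : 0 < a := zero_lt_one.trans_le ha
  rw [← div_div]
  gcongr
  exact le_min (div_le_self hε ha) ((div_le_iff₀' ha0).2 hεr)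

lemma forall_mem_Icc_le_of_dense {α β : Type*} [TopologicalSpace α] [LinearOrder α]
    [OrderTopology α] [DenselyOrdered α] [TopologicalSpace β] [Preorder β] [OrderClosedTopology β]
    {D : Set α} (hD : Dense D) {a b : α} (hab : a ≠ b) {f : α → β} (hf : Continuous f) {c : β}
    (hle : ∀ t ∈ D ∩ Ico a b, f t ≤ c) : ∀ t ∈ Icc a b, f t ≤ c := by
  have hclosed : IsClosed {t | f t ≤ c} := isClosed_le hf continuous_const
  have hIoo : Ioo a b ⊆ {t | f t ≤ c} :=
    (hD.open_subset_closure_inter isOpen_Ioo).trans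
      (closure_minimal (fun t ht => hle t ⟨ht.2, Ioo_subset_Ico_self ht.1⟩) hclosed)
  rw [← closure_Ioo hab]
  exact closure_minimal hIoo hclosed

variable {Ω : Type*} {m mΩ : MeasurableSpace Ω} {μ : Measure Ω}

lemma measure_prodMk_mem_eq_lintegral_of_indepFun [IsFiniteMeasure μ] {E F : Type*}
    [MeasurableSpace E] [MeasurableSpace F] {X : Ω → E} {Z : Ω → F} (hX : Measurable X)
    (hZ : Measurable Z) (hXZ : IndepFun X Z μ) {S : Set (E × F)} (hS : MeasurableSet S) :
    μ {ω | (X ω, Z ω) ∈ S} = ∫⁻ ω, μ.map Z (Prod.mk (X ω) ⁻¹' S) ∂μ := by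
  have hlaw : μ.map (fun ω => (X ω, Z ω)) = (μ.map X).prod (μ.map Z) :=
    (indepFun_iff_map_prod_eq_prod_map_map hX.aemeasurable hZ.aemeasurable).1 hXZ
  calc μ {ω | (X ω, Z ω) ∈ S} = μ.map (fun ω => (X ω, Z ω)) S :=
        (Measure.map_apply (hX.prodMk hZ) hS).symm
    _ = ∫⁻ x, μ.map Z (Prod.mk x ⁻¹' S) ∂μ.map X := by rw [hlaw, Measure.prod_apply hS]
    _ = ∫⁻ ω, μ.map Z (Prod.mk (X ω) ⁻¹' S) ∂μ :=
        lintegral_map (measurable_measure_prodMk_left hS) hX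

lemma measure_inter_prodMk_mem_eq_setLIntegral [IsFiniteMeasure μ] {E F : Type*}
    [MeasurableSpace E] [MeasurableSpace F] (hm : m ≤ mΩ) {X : Ω → E}
    {Z : Ω → F} (hX : Measurable[m] X) (hZ : Measurable Z)
    (hind : Indep (MeasurableSpace.comap Z inferInstance) m μ) {A : Set Ω}
    (hA : MeasurableSet[m] A) {S : Set (E × F)} (hS : MeasurableSet S) :
    μ (A ∩ {ω | (X ω, Z ω) ∈ S}) = ∫⁻ ω in A, μ.map Z (Prod.mk (X ω) ⁻¹' S) ∂μ := by
  -- Conditioning on `X` and the truth value of `ω ∈ A` together reduces to the case `A = univ`.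
  let X' : Ω → Prop × E := fun ω => (ω ∈ A, X ω)
  let S' : Set ((Prop × E) × F) := {q | q.1.1 ∧ (q.1.2, q.2) ∈ S}
  have hX' : Measurable[m] X' := ((@measurable_mem Ω A m).2 hA).prodMk hX
  have hS' : MeasurableSet S' :=
    (measurableSet_setOfPred.2 (by fun_prop)).inter (hS.preimage (by fun_prop))
  have hX'Z : IndepFun X' Z μ :=
    (IndepFun_iff_Indep _ _ _).2 (indep_of_indep_of_le_left hind.symm hX'.comap_le)
  have hfree := measure_prodMk_mem_eq_lintegral_of_indepFun (hX'.mono hm le_rfl) hZ hX'Z hS'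
  rw [← lintegral_indicator (hm A hA)]
  refine hfree.trans (lintegral_congr fun ω => ?_)
  by_cases hω : ω ∈ A
  · simp [X', S', hω, Set.preimage]
  · simp [X', S', hω]

lemma measure_biUnion_finset_inter_le_of_adapted {ι : Type*} [LinearOrder ι]
    (𝓕 : Filtration ι mΩ) {E : ι → Set Ω} {F : Set Ω} {q : ENNReal} (T : Finset ι)
    (hE : ∀ t ∈ T, MeasurableSet[𝓕 t] (E t))
    (hq : ∀ t ∈ T, ∀ B ⊆ E t, MeasurableSet[𝓕 t] B → μ (B ∩ F) ≤ q * μ B) :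
    μ ((⋃ t ∈ T, E t) ∩ F) ≤ q * μ (⋃ t ∈ T, E t) := by
  induction T using Finset.induction_on_max with
  | empty => simp
  | insert a T hlt ih =>
    simp only [Finset.mem_insert, forall_eq_or_imp] at hE hq
    set U := ⋃ t ∈ T, E t
    have hU : MeasurableSet[𝓕 a] U :=
      T.measurableSet_biUnion fun t ht => 𝓕.mono (hlt t ht).le _ (hE.2 t ht)
    rw [Finset.set_biUnion_insert, union_comm, ← union_sdiff_self]
    calc μ ((U ∪ E a \ U) ∩ F) ≤ μ (U ∩ F) + μ (E a \ U ∩ F) := by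
          rw [union_inter_distrib_right]
          exact measure_union_le _ _
      _ ≤ q * μ U + q * μ (E a \ U) :=
          add_le_add (ih hE.2 hq.2) (hq.1 _ sdiff_subset (hE.1.diff hU))
      _ = q * μ (U ∪ E a \ U) := by
          rw [measure_union disjoint_sdiff_right (𝓕.le a _ (hE.1.diff hU)), mul_add]

/- The strong Markov property at the first `t ∈ D` such that `E t` occurs, except that `D` may have
no first such `t`. -/
lemma measure_biUnion_inter_le_of_adapted {ι : Type*} [LinearOrder ι] (𝓕 : Filtration ι mΩ)
    {E : ι → Set Ω} {F : Set Ω} {q : ENNReal} {D : Set ι} (hD : D.Countable)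
    (hE : ∀ t ∈ D, MeasurableSet[𝓕 t] (E t))
    (hq : ∀ t ∈ D, ∀ B ⊆ E t, MeasurableSet[𝓕 t] B → μ (B ∩ F) ≤ q * μ B) :
    μ ((⋃ t ∈ D, E t) ∩ F) ≤ q * μ (⋃ t ∈ D, E t) := by
  have := hD.to_subtype
  have hdirected : Directed (· ⊆ ·) fun T : Finset D => ⋃ t ∈ T, E t ∩ F :=
    directed_of_isDirected_le fun _ _ h => biUnion_subset_biUnion_left h
  rw [iUnion₂_inter, biUnion_eq_iUnion, iUnion_eq_iUnion_finset, hdirected.measure_iUnion]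
  refine iSup_le fun T => ?_
  have hT := measure_biUnion_finset_inter_le_of_adapted (μ := μ) 𝓕 (T.map (.subtype _))
    (by simpa using fun t ht _ => hE t ht) (by simpa using fun t ht _ => hq t ht)
  calc μ (⋃ t ∈ T, E t ∩ F) = μ ((⋃ t ∈ T.map (.subtype _), E t) ∩ F) := by
        simp [iUnion_inter]
    _ ≤ q * μ (⋃ t ∈ T.map (.subtype _), E t) := hT
    _ ≤ q * μ (⋃ t ∈ D, E t) := by
        gcongr q * μ ?_
        exact biUnion_subset_biUnion_left fun t => T.property_of_mem_map_subtype

end General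

section Gaussian

lemma setLIntegral_ball_const (b : EuclideanSpace ℝ (Fin 2)) {ε k : ℝ} (hε : 0 ≤ ε) (hk : 0 ≤ k) :
    ∫⁻ _ in ball b ε, ENNReal.ofReal k = ENNReal.ofReal (k * (π * ε ^ 2)) := by
  rw [setLIntegral_const, EuclideanSpace.volume_ball_fin_two, ← ENNReal.ofReal_pow hε,
    ← ENNReal.ofReal_mul (by positivity), ← ENNReal.ofReal_mul hk, mul_comm (ε ^ 2)]

lemma le_gaussianPlane_ball {v ε ρ : ℝ} (hv : 0 < v) (hε : 0 ≤ ε)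
    {b : EuclideanSpace ℝ (Fin 2)} (hb : ‖b‖ + ε ≤ ρ) :
    ENNReal.ofReal (exp (-ρ ^ 2 / (2 * v)) / (2 * v) * ε ^ 2) ≤ gaussianPlane v (ball b ε) := by
  rw [gaussianPlane, withDensity_apply _ measurableSet_ball]
  calc ENNReal.ofReal (exp (-ρ ^ 2 / (2 * v)) / (2 * v) * ε ^ 2)
      = ∫⁻ _ in ball b ε, ENNReal.ofReal ((2 * π * v)⁻¹ * exp (-ρ ^ 2 / (2 * v))) := by
        rw [setLIntegral_ball_const b hε (by positivity)]
        congr 1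
        field_simp
    _ ≤ _ := setLIntegral_mono' measurableSet_ball fun z hz => by
        have hz' : ‖z‖ ≤ ρ := by
          linarith [norm_le_norm_add_norm_sub' z b, mem_ball_iff_norm.1 hz]
        gcongr

lemma gaussianPlane_ball_le {v ε ρ : ℝ} (hv : 0 < v) (hε : 0 ≤ ε) (hρ : 0 ≤ ρ)
    {b : EuclideanSpace ℝ (Fin 2)} (hb : ρ + ε ≤ ‖b‖) :
    gaussianPlane v (ball b ε) ≤ ENNReal.ofReal (exp (-ρ ^ 2 / (2 * v)) / (2 * v) * ε ^ 2) := by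
  rw [gaussianPlane, withDensity_apply _ measurableSet_ball]
  calc _ ≤ ∫⁻ _ in ball b ε, ENNReal.ofReal ((2 * π * v)⁻¹ * exp (-ρ ^ 2 / (2 * v))) :=
        setLIntegral_mono' measurableSet_ball fun z hz => by
          have hz' : ρ ≤ ‖z‖ := by
            linarith [norm_le_norm_add_norm_sub z b, mem_ball_iff_norm.1 hz]
          gcongr
    _ = ENNReal.ofReal (exp (-ρ ^ 2 / (2 * v)) / (2 * v) * ε ^ 2) := by
        rw [setLIntegral_ball_const b hε (by positivity)]
        congr 1
        field_simp

end Gaussian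

section TubeEvent

variable {Ω E : Type*} [NormedAddCommGroup E] [NormedSpace ℝ E]

/-- The event that at time `t` the process `W` is in the ball of radius `ε` around the position
`t • v` of the uniform motion with velocity `v`, and that at the earlier times `u ∈ D` it was within
`δ` of that motion. A countable `D` makes this measurable with respect to the past of `t`. -/
def tubeEvent (W : ℝ → Ω → E) (D : Set ℝ) (v : E) (δ ε t : ℝ) : Set Ω :=
  {ω | W t ω ∈ ball (t • v) ε ∧ ∀ u ∈ D ∩ Ico 0 t, ‖W u ω - u • v‖ ≤ δ}

lemma mem_tubeEvent_add {W : ℝ → Ω → E} {D : Set ℝ} {v : E} {δ ε ε' η s h : ℝ} {ω : Ω}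
    (hs : ω ∈ tubeEvent W D v (δ + η) ε' s) (hv : h * ‖v‖ ≤ η)
    (hend : W (s + h) ω ∈ ball ((s + h) • v) ε)
    (hstay : ∀ u ∈ D ∩ Ico s (s + h), ‖W u ω - s • v‖ ≤ δ) :
    ω ∈ tubeEvent W D v (δ + η) ε (s + h) := by
  refine ⟨hend, fun u ⟨huD, hu0, huh⟩ => ?_⟩
  rcases lt_or_ge u s with hus | hsu
  · exact hs.2 u ⟨huD, hu0, hus⟩
  · have hdrift : ‖s • v - u • v‖ ≤ η := by
      calc ‖s • v - u • v‖ = (u - s) * ‖v‖ := by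
            rw [norm_sub_rev, ← sub_smul, norm_smul, norm_of_nonneg (sub_nonneg.2 hsu)]
        _ ≤ h * ‖v‖ := by gcongr; linarith
        _ ≤ η := hv
    calc ‖W u ω - u • v‖ ≤ ‖W u ω - s • v‖ + ‖s • v - u • v‖ := norm_sub_le_norm_sub_add_norm_sub ..
      _ ≤ δ + η := add_le_add (hstay u ⟨huD, hsu, huh⟩) hdrift

lemma measurableSet_tubeEvent [MeasurableSpace E] [OpensMeasurableSpace E] {m : MeasurableSpace Ω}
    {W : ℝ → Ω → E} {t : ℝ} (ht : 0 ≤ t) (hW : ∀ u ∈ Icc 0 t, Measurable (W u))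
    {D : Set ℝ} (hD : D.Countable) (v : E) (δ ε : ℝ) :
    MeasurableSet (tubeEvent W D v δ ε t) := by
  refine (measurableSet_ball.preimage (hW t ⟨ht, le_rfl⟩)).inter ?_
  have hforall : {ω | ∀ u ∈ D ∩ Ico 0 t, ‖W u ω - u • v‖ ≤ δ} =
      ⋂ u ∈ D ∩ Ico 0 t, W u ⁻¹' closedBall (u • v) δ := by
    ext ω
    simp [dist_eq_norm]
  change MeasurableSet {ω | ∀ u ∈ D ∩ Ico 0 t, ‖W u ω - u • v‖ ≤ δ}
  rw [hforall]
  exact .biInter (hD.mono inter_subset_left) fun u hu =>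
    isClosed_closedBall.measurableSet.preimage (hW u ⟨hu.2.1, hu.2.2.le⟩)

end TubeEvent

/-- The lower bound for the probability of one step of the chaining argument started within `r` of
its centre and ending in a ball of radius `r`; with a final ball of radius `ε ≤ r`, the bound is
`stepConst * (ε / r) ^ 2`. -/
noncomputable def stepConst : ℝ := exp (-9 / 2) / 2 - exp (-8) / 2

lemma stepConst_pos : 0 < stepConst := by
  have : exp (-8) < exp (-9 / 2) := exp_lt_exp.2 (by norm_num)
  unfold stepConst
  linarith

namespace IsPlanarBM

variable {Ω : Type*} [MeasureSpace Ω] {W : ℝ → Ω → EuclideanSpace ℝ (Fin 2)}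

/-- The filtration generated by a Brownian motion, indexed by `ℝ` and trivial at negative times. -/
def filtration (hW : IsPlanarBM W) : Filtration ℝ (inferInstance : MeasurableSpace Ω) where
  seq s := ⨆ u ∈ Icc (0 : ℝ) s, MeasurableSpace.comap (W u) inferInstance
  mono' _ _ hst := biSup_mono fun _ => fun hu => Icc_subset_Icc_right hst hu
  le' _ := iSup₂_le fun u _ => (hW.measurable u).comap_le

lemma measurable_filtration (hW : IsPlanarBM W) {u s : ℝ} (hu : u ∈ Icc 0 s) :
    Measurable[hW.filtration s] (W u) :=
  measurable_iff_comap_le.2 <|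
    le_iSup₂ (f := fun u (_ : u ∈ Icc (0 : ℝ) s) => MeasurableSpace.comap (W u) inferInstance) u hu

lemma measure_tubeEvent_le_of_dense (hW : IsPlanarBM W) {D : Set ℝ} (hD : Dense D)
    (v : EuclideanSpace ℝ (Fin 2)) (δ ε : ℝ) {t : ℝ} (ht : 0 < t) :
    ℙ (tubeEvent W D v δ ε t) ≤
      ℙ {ω | W t ω ∈ ball (t • v) ε ∧ ∀ u ∈ Icc 0 t, ‖W u ω - u • v‖ ≤ δ} := by
  refine measure_mono_ae ?_
  filter_upwards [hW.cont] with ω hcont hω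
  exact ⟨hω.1, forall_mem_Icc_le_of_dense hD ht.ne (by fun_prop) hω.2⟩

variable [IsProbabilityMeasure (ℙ : Measure Ω)]

lemma measure_inter_mem_ball (hW : IsPlanarBM W) {s t : ℝ} (hs : 0 ≤ s) (hst : s < t)
    {A : Set Ω} (hA : MeasurableSet[hW.filtration s] A) (b : EuclideanSpace ℝ (Fin 2)) (ε : ℝ) :
    ℙ (A ∩ {ω | W t ω ∈ ball b ε}) = ∫⁻ ω in A, gaussianPlane (t - s) (ball (b - W s ω) ε) := by
  let S := {p : EuclideanSpace ℝ (Fin 2) × EuclideanSpace ℝ (Fin 2) | p.1 + p.2 ∈ ball b ε}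
  have hS : MeasurableSet S := measurableSet_ball.preimage measurable_add
  have hfreeze := measure_inter_prodMk_mem_eq_setLIntegral (hW.filtration.le s)
    (hW.measurable_filtration ⟨hs, le_rfl⟩) ((hW.measurable t).sub (hW.measurable s))
    (hW.incr_indep s t hs hst.le) hA hS
  have hlaw : Measure.map (W t - W s) ℙ = gaussianPlane (t - s) := hW.incr_law s t hs hst
  rw [hlaw] at hfreeze
  simp only [S, mem_ofPred_eq, Pi.sub_apply, add_sub_cancel] at hfreeze
  simp only [← preimage_add_ball]
  exact hfreeze

lemma le_measure_inter_mem_ball (hW : IsPlanarBM W) {s r ε : ℝ} (hs : 0 ≤ s) (hr : 0 < r)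
    (hε : 0 ≤ ε) (hεr : ε ≤ r) {A : Set Ω} (hA : MeasurableSet[hW.filtration s] A)
    {b : EuclideanSpace ℝ (Fin 2)} (hb : ∀ ω ∈ A, ‖b - W s ω‖ ≤ 2 * r) :
    ENNReal.ofReal (exp (-9 / 2) / 2 * (ε / r) ^ 2) * ℙ A ≤
      ℙ (A ∩ {ω | W (s + r ^ 2) ω ∈ ball b ε}) := by
  rw [hW.measure_inter_mem_ball hs (lt_add_of_pos_right s (pow_pos hr 2)) hA,
    ← setLIntegral_const, add_sub_cancel_left]
  refine setLIntegral_mono' (hW.filtration.le s _ hA) fun ω hω => ?_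
  have hconst : exp (-9 / 2) / 2 * (ε / r) ^ 2 =
      exp (-(3 * r) ^ 2 / (2 * r ^ 2)) / (2 * r ^ 2) * ε ^ 2 := by
    rw [show -(3 * r) ^ 2 / (2 * r ^ 2) = -9 / 2 by field_simp; norm_num]
    field_simp
  rw [hconst]
  exact le_gaussianPlane_ball (pow_pos hr 2) hε (by linarith [hb ω hω])

lemma measure_inter_mem_ball_le (hW : IsPlanarBM W) {s t r ε : ℝ} (hs : 0 ≤ s) (hst : s < t)
    (hr : 0 < r) (htr : t - s ≤ r ^ 2) (hε : 0 ≤ ε) (hεr : ε ≤ r) {A : Set Ω}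
    (hA : MeasurableSet[hW.filtration s] A) {b : EuclideanSpace ℝ (Fin 2)}
    (hb : ∀ ω ∈ A, 5 * r ≤ ‖b - W s ω‖) :
    ℙ (A ∩ {ω | W t ω ∈ ball b ε}) ≤ ENNReal.ofReal (exp (-8) / 2 * (ε / r) ^ 2) * ℙ A := by
  rw [hW.measure_inter_mem_ball hs hst hA, ← setLIntegral_const]
  refine setLIntegral_mono' (hW.filtration.le s _ hA) fun ω hω => ?_
  have hv : 0 < t - s := sub_pos.2 hst
  refine (gaussianPlane_ball_le hv hε (ρ := 4 * r) (by positivity) (by linarith [hb ω hω])).trans ?_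
  have hconst : exp (-8) / 2 * (ε / r) ^ 2 =
      exp (-(4 * r) ^ 2 / (2 * r ^ 2)) / (2 * r ^ 2) * ε ^ 2 := by
    rw [show -(4 * r) ^ 2 / (2 * r ^ 2) = -8 by field_simp; norm_num]
    field_simp
  rw [hconst]
  gcongr ENNReal.ofReal (?_ * ε ^ 2)
  exact exp_neg_div_div_le_of_le (by positivity) (by linarith) (by nlinarith [sq_nonneg r])

lemma measure_exit_inter_mem_ball_le (hW : IsPlanarBM W) {s r ε : ℝ} (hs : 0 ≤ s) (hr : 0 < r)
    (hε : 0 ≤ ε) (hεr : ε ≤ r) {A : Set Ω} (hA : MeasurableSet[hW.filtration s] A)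
    {a b : EuclideanSpace ℝ (Fin 2)} (hab : ‖b - a‖ ≤ r) {D : Set ℝ} (hD : D.Countable) :
    ℙ ((⋃ t ∈ D ∩ Ico s (s + r ^ 2), A ∩ {ω | W t ω ∈ (closedBall a (6 * r))ᶜ}) ∩
        {ω | W (s + r ^ 2) ω ∈ ball b ε}) ≤
      ENNReal.ofReal (exp (-8) / 2 * (ε / r) ^ 2) * ℙ A := by
  refine (measure_biUnion_inter_le_of_adapted hW.filtration
    (q := ENNReal.ofReal (exp (-8) / 2 * (ε / r) ^ 2)) (hD.mono inter_subset_left)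
    ?_ ?_).trans ?_
  · rintro t ⟨-, hst, -⟩
    exact (hW.filtration.mono hst _ hA).inter
      (isClosed_closedBall.measurableSet.compl.preimage
        (hW.measurable_filtration ⟨hs.trans hst, le_rfl⟩))
  · rintro t ⟨-, hst, htr⟩ B hBE hB
    refine hW.measure_inter_mem_ball_le (hs.trans hst) htr hr (by linarith) hε hεr hB
      fun ω hω => ?_
    have hfar : 6 * r < ‖W t ω - a‖ := by
      simpa [dist_eq_norm] using (hBE hω).2
    have htriangle := norm_sub_le_norm_sub_add_norm_sub (W t ω) b a
    rw [norm_sub_rev (W t ω) b] at htriangle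
    linarith
  · gcongr
    exact iUnion₂_subset fun _ _ => inter_subset_left

lemma le_measure_stay_inter_mem_ball (hW : IsPlanarBM W) {s r ε : ℝ} (hs : 0 ≤ s) (hr : 0 < r)
    (hε : 0 ≤ ε) (hεr : ε ≤ r) {A : Set Ω} (hA : MeasurableSet[hW.filtration s] A)
    {a b : EuclideanSpace ℝ (Fin 2)} (ha : ∀ ω ∈ A, W s ω ∈ ball a r) (hab : ‖b - a‖ ≤ r)
    {D : Set ℝ} (hD : D.Countable) :
    ENNReal.ofReal (stepConst * (ε / r) ^ 2) * ℙ A ≤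
      ℙ {ω ∈ A | W (s + r ^ 2) ω ∈ ball b ε ∧
        ∀ t ∈ D ∩ Ico s (s + r ^ 2), ‖W t ω - a‖ ≤ 6 * r} := by
  set land : Set Ω := {ω | W (s + r ^ 2) ω ∈ ball b ε}
  set exit : Set Ω := ⋃ t ∈ D ∩ Ico s (s + r ^ 2), A ∩ {ω | W t ω ∈ (closedBall a (6 * r))ᶜ}
  have hland : ENNReal.ofReal (exp (-9 / 2) / 2 * (ε / r) ^ 2) * ℙ A ≤ ℙ (A ∩ land) := by
    refine hW.le_measure_inter_mem_ball hs hr hε hεr hA fun ω hω => ?_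
    have htriangle := norm_sub_le_norm_sub_add_norm_sub b a (W s ω)
    rw [norm_sub_rev a] at htriangle
    linarith [mem_ball_iff_norm.1 (ha ω hω)]
  have hcover : A ∩ land ⊆ {ω ∈ A | W (s + r ^ 2) ω ∈ ball b ε ∧
      ∀ t ∈ D ∩ Ico s (s + r ^ 2), ‖W t ω - a‖ ≤ 6 * r} ∪ exit ∩ land := by
    rintro ω ⟨hωA, hωland⟩
    by_cases hstay : ∀ t ∈ D ∩ Ico s (s + r ^ 2), ‖W t ω - a‖ ≤ 6 * r
    · exact .inl ⟨hωA, hωland, hstay⟩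
    · push Not at hstay
      obtain ⟨t, ht, hfar⟩ := hstay
      exact .inr ⟨mem_biUnion ht ⟨hωA, by simpa [dist_eq_norm] using hfar⟩, hωland⟩
  have hsplit : exp (-9 / 2) / 2 * (ε / r) ^ 2 =
      stepConst * (ε / r) ^ 2 + exp (-8) / 2 * (ε / r) ^ 2 := by
    unfold stepConst
    ring
  have hpos := stepConst_pos
  rw [hsplit, ENNReal.ofReal_add (by positivity) (by positivity), add_mul] at hland
  have hfinite : ENNReal.ofReal (exp (-8) / 2 * (ε / r) ^ 2) * ℙ A ≠ ⊤ :=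
    ENNReal.mul_ne_top ENNReal.ofReal_ne_top (measure_ne_top _ _)
  refine (ENNReal.add_le_add_iff_right hfinite).1 ?_
  calc _ ≤ ℙ (A ∩ land) := hland
    _ ≤ _ := (measure_mono hcover).trans (measure_union_le _ _)
    _ ≤ _ := by gcongr; exact hW.measure_exit_inter_mem_ball_le hs hr hε hεr hA hab hD

lemma le_measure_tubeEvent_add (hW : IsPlanarBM W) {D : Set ℝ} (hD : D.Countable)
    {v : EuclideanSpace ℝ (Fin 2)} {r ε s : ℝ} (hr : 0 < r) (hv : r * ‖v‖ ≤ 1) (hε : 0 ≤ ε)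
    (hεr : ε ≤ r) (hs : 0 ≤ s) :
    ENNReal.ofReal (stepConst * (ε / r) ^ 2) * ℙ (tubeEvent W D v (7 * r) r s) ≤
      ℙ (tubeEvent W D v (7 * r) ε (s + r ^ 2)) := by
  have hdrift : r ^ 2 * ‖v‖ ≤ r := by nlinarith
  have hnear : ‖(s + r ^ 2) • v - s • v‖ ≤ r := by
    rwa [← sub_smul, add_sub_cancel_left, norm_smul, norm_of_nonneg (sq_nonneg r)]
  have hmeas := measurableSet_tubeEvent hs (fun u hu => hW.measurable_filtration hu) hD v (7 * r) r
  refine (hW.le_measure_stay_inter_mem_ball hs hr hε hεr hmeas (fun ω hω => hω.1) hnear hD).trans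
    (measure_mono ?_)
  rintro ω ⟨hω, hend, hstay⟩
  rw [show 7 * r = 6 * r + r by ring] at hω ⊢
  exact mem_tubeEvent_add hω hdrift hend hstay

lemma le_measure_tubeEvent_mul (hW : IsPlanarBM W) {D : Set ℝ} (hD : D.Countable)
    {v : EuclideanSpace ℝ (Fin 2)} {r : ℝ} (hr : 0 < r) (hv : r * ‖v‖ ≤ 1) (n : ℕ) :
    ENNReal.ofReal (stepConst ^ n) ≤ ℙ (tubeEvent W D v (7 * r) r (n * r ^ 2)) := by
  induction n with
  | zero =>
    have hstart : tubeEvent W D v (7 * r) r 0 =ᵐ[ℙ] univ := by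
      refine Filter.eventuallyEq_univ.2 ?_
      filter_upwards [hW.init] with ω hω
      simp [tubeEvent, hω, hr]
    simp [measure_congr hstart]
  | succ n ih =>
    calc ENNReal.ofReal (stepConst ^ (n + 1))
        = ENNReal.ofReal (stepConst * (r / r) ^ 2) * ENNReal.ofReal (stepConst ^ n) := by
          rw [div_self hr.ne', one_pow, mul_one, pow_succ', ENNReal.ofReal_mul stepConst_pos.le]
      _ ≤ ENNReal.ofReal (stepConst * (r / r) ^ 2) *
          ℙ (tubeEvent W D v (7 * r) r (n * r ^ 2)) := by gcongr
      _ ≤ ℙ (tubeEvent W D v (7 * r) r (n * r ^ 2 + r ^ 2)) :=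
          hW.le_measure_tubeEvent_add hD hr hv hr.le le_rfl (by positivity)
      _ = ℙ (tubeEvent W D v (7 * r) r ((n + 1 : ℕ) * r ^ 2)) := by push_cast; ring_nf

lemma le_measure_tube (hW : IsPlanarBM W) {v : EuclideanSpace ℝ (Fin 2)} {r ε : ℝ} (hr : 0 < r)
    (hv : r * ‖v‖ ≤ 1) (hε : 0 ≤ ε) (hεr : ε ≤ r) {n : ℕ} (hn : n ≠ 0) {t : ℝ}
    (ht : n * r ^ 2 = t) :
    ENNReal.ofReal (stepConst ^ n * (ε / r) ^ 2) ≤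
      ℙ {ω | W t ω ∈ ball (t • v) ε ∧ ∀ u ∈ Icc 0 t, ‖W u ω - u • v‖ ≤ 7 * r} := by
  obtain ⟨D, hDcountable, hDdense⟩ := TopologicalSpace.exists_countable_dense ℝ
  obtain ⟨n, rfl⟩ := Nat.exists_eq_succ_of_ne_zero hn
  have hpos := stepConst_pos
  calc ENNReal.ofReal (stepConst ^ (n + 1) * (ε / r) ^ 2)
      = ENNReal.ofReal (stepConst * (ε / r) ^ 2) * ENNReal.ofReal (stepConst ^ n) := by
        rw [← ENNReal.ofReal_mul (by positivity)]
        ring_nf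
    _ ≤ ENNReal.ofReal (stepConst * (ε / r) ^ 2) *
        ℙ (tubeEvent W D v (7 * r) r (n * r ^ 2)) := by
        gcongr
        exact hW.le_measure_tubeEvent_mul hDcountable hr hv n
    _ ≤ ℙ (tubeEvent W D v (7 * r) ε (n * r ^ 2 + r ^ 2)) :=
        hW.le_measure_tubeEvent_add hDcountable hr hv hε hεr (by positivity)
    _ = ℙ (tubeEvent W D v (7 * r) ε t) := by rw [← ht]; push_cast; ring_nf
    _ ≤ _ := hW.measure_tubeEvent_le_of_dense hDdense v _ ε (ht ▸ by positivity)

lemma le_measure_tube_of_scale (hW : IsPlanarBM W) {m : ℕ} {γ R ε : ℝ} (hγ : 0 < γ)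
    (hmγ : 7 / γ ≤ m) (hR : 0 < R) {y : EuclideanSpace ℝ (Fin 2)} (hy : ‖y‖ ≤ m * R)
    (hε : 0 < ε) (hεR : ε ≤ m * R) :
    ENNReal.ofReal (stepConst ^ m ^ 2 / m ^ 2 * (ε / R) ^ 2) ≤
      ℙ {ω | W (R ^ 2) ω ∈ ball y ε ∧
        ∀ t ∈ Icc (0 : ℝ) (R ^ 2), ‖W t ω - (t / R ^ 2) • y‖ ≤ γ * R} := by
  have hm : 0 < m := Nat.cast_pos.1 ((by positivity : 0 < 7 / γ).trans_le hmγ)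
  have hm1 : (1 : ℝ) ≤ m := Nat.one_le_cast.2 hm
  have hpos := stepConst_pos
  set r := R / m with hr_def
  have hr : 0 < r := by positivity
  have hRr : R = m * r := by rw [hr_def]; field_simp
  set v := (R ^ 2)⁻¹ • y with hv_def
  have hline (t : ℝ) : t • v = (t / R ^ 2) • y := by rw [hv_def, smul_smul, div_eq_mul_inv]
  have hend : R ^ 2 • v = y := by rw [hline, div_self (by positivity), one_smul]
  have hspeed : r * ‖v‖ ≤ 1 := by
    calc r * ‖v‖ = r * (‖y‖ / R ^ 2) := by
          rw [hv_def, norm_smul, norm_of_nonneg (by positivity), inv_mul_eq_div]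
      _ ≤ r * (m * R / R ^ 2) := by gcongr
      _ = 1 := by rw [hr_def]; field_simp
  have hratio : ε / (m ^ 2 * r) ≤ min ε r / r :=
    div_mul_le_min_div (one_le_pow₀ hm1) hr hε.le (by rwa [sq, mul_assoc, ← hRr])
  have hwidth : 7 * r ≤ γ * R := by
    rw [hRr, ← mul_assoc]
    gcongr
    exact (div_le_iff₀' hγ).1 hmγ
  calc ENNReal.ofReal (stepConst ^ m ^ 2 / m ^ 2 * (ε / R) ^ 2)
      = ENNReal.ofReal (stepConst ^ m ^ 2 * (ε / (m ^ 2 * r)) ^ 2) := by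
        rw [hRr]
        field_simp
    _ ≤ ENNReal.ofReal (stepConst ^ m ^ 2 * (min ε r / r) ^ 2) := by gcongr
    _ ≤ ℙ {ω | W (R ^ 2) ω ∈ ball (R ^ 2 • v) (min ε r) ∧
          ∀ t ∈ Icc 0 (R ^ 2), ‖W t ω - t • v‖ ≤ 7 * r} :=
        hW.le_measure_tube hr hspeed (by positivity) (min_le_right _ _) (pow_ne_zero 2 hm.ne')
          (by rw [hRr]; push_cast; ring)
    _ ≤ _ := by
        simp only [hend, hline]
        exact measure_mono fun ω ⟨hball, htube⟩ =>
          ⟨ball_subset_ball (min_le_left _ _) hball, fun t ht => (htube t ht).trans hwidth⟩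

end IsPlanarBM

theorem stmt_0_general {γ : ℝ} (hγ : 0 < γ) (ρ : ℝ) :
    ∃ c : ℝ, 0 < c ∧
      ∀ (Ω : Type*) [MeasureSpace Ω] [IsProbabilityMeasure (ℙ : Measure Ω)]
        (W : ℝ → Ω → EuclideanSpace ℝ (Fin 2)), IsPlanarBM W →
        ∀ R : ℝ, 0 < R → ∀ y : EuclideanSpace ℝ (Fin 2), ‖y‖ ≤ ρ * R →
        ∀ ε : ℝ, 0 < ε → ε ≤ ρ * R →
        ENNReal.ofReal (c * (ε / R) ^ 2) ≤
          ℙ {ω | W (R ^ 2) ω ∈ ball y ε ∧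
              ∀ t ∈ Icc (0 : ℝ) (R ^ 2), ‖W t ω - (t / R ^ 2) • y‖ ≤ γ * R} := by
  obtain ⟨m, hm⟩ := exists_nat_ge (max ρ (7 / γ))
  obtain ⟨hmρ, hmγ⟩ := max_le_iff.1 hm
  have hm0 : (0 : ℝ) < m := (by positivity : 0 < 7 / γ).trans_le hmγ
  have hpos := stepConst_pos
  refine ⟨stepConst ^ m ^ 2 / m ^ 2, by positivity, fun Ω _ _ W hW R hR y hy ε hε hεR => ?_⟩
  have hmR : ρ * R ≤ m * R := by gcongr
  exact hW.le_measure_tube_of_scale hγ hmγ hR (hy.trans hmR) hε (hεR.trans hmR)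

theorem stmt_0 (γ : ℝ) (hγ0 : 0 < γ) (hγ1 : γ < 1) :
    ∃ c : ℝ, 0 < c ∧
      ∀ (Ω : Type) (_ : MeasureSpace Ω) (_ : IsProbabilityMeasure (ℙ : Measure Ω))
        (W : ℝ → Ω → EuclideanSpace ℝ (Fin 2)), IsPlanarBM W →
        ∀ R : ℝ, 0 < R → ∀ y : EuclideanSpace ℝ (Fin 2), ‖y‖ ≤ R →
        ∀ ε : ℝ, 0 < ε → ε ≤ γ * R / 2 →
        ENNReal.ofReal (c * (ε / R) ^ 2) ≤
          ℙ {ω | W (R ^ 2) ω ∈ Metric.ball y ε ∧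
              ∀ t ∈ Set.Icc (0 : ℝ) (R ^ 2), ‖W t ω - (t / R ^ 2) • y‖ ≤ γ * R} := by
  obtain ⟨c, hc, hbound⟩ := stmt_0_general hγ0 1
  exact ⟨c, hc, fun Ω _ _ W hW R hR y hy ε hε hεR =>
    hbound Ω W hW R hR y (by linarith) ε hε (by nlinarith)⟩
end

section
/- Fix constants 0 < λ_min ≤ λ_max and α, β, γ > 0. There exists a constant c > 0 depending only on α, β, γ such that the following holds. Let W be a standard planar Brownian motion, and let 𝓔₁ and 𝓔₂ be random variables on the same probability space such that W, 𝓔₁, 𝓔₂ are mutually independent, 𝓔₁ is exponentially distributed with rate ρ₁, and 𝓔₂ is exponentially distributed with rate ρ₂, where λ_min ≤ ρ₁ ≤ λ_max and λ_min ≤ ρ₂ ≤ λ_max. Then for every r > 0 with λ_max·r ≤ 1 and every v ∈ ℝ² with ‖v‖ ≤ (4/5)·r, the probability that simultaneously 𝓔₁ < α·r, 𝓔₂ > β·r, and ‖W_t − (t/r²)·v‖ ≤ γ·r for all t ∈ [0, r²], is at least c·r·λ_min. -/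
open MeasureTheory ProbabilityTheory Real

/-!
Cut `[0, r ^ 2]` into `n` cells, with `n` independent of `r`. If every increment of `W` over a cell
lies in the ball of radius of order `r / n` around `v / n`, and `W` oscillates by at most a small
multiple of `r` inside each cell, then `W` follows the segment up to `γ * r`. By Brownian scaling a
single increment falls in its ball with probability `h ≥ K / n`, where `K` does not depend on `r`
or `n`, so all of them do with probability `h ^ n`. The oscillation inside a cell is controlled by
Lévy's dyadic chaining. An increment at some dyadic level of some cell being too large, together
with the constraints on the other `n - 1` cells, has probability at most `n * h ^ (n - 1) * O(n⁻³)`.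
For `n` large this is at most `h ^ n / 2`, which leaves an event of probability at least
`(K / n) ^ n / 2`. The exponential variables enter only through independence.
-/

open scoped ENNReal NNReal

section DyadicChaining

variable {E : Type*} [SeminormedAddCommGroup E]

/-- The increments of `f` over the `2 ^ m` dyadic subintervals of `[0, 1]` of length `2 ^ (-m)`
are bounded by `a m`, for every level `m`: the hypothesis of Lévy's chaining argument. -/
def DyadicIncrementsLE (f : ℝ → E) (a : ℕ → ℝ) : Prop :=
  ∀ m k : ℕ, k < 2 ^ m → ‖f ((k + 1) / 2 ^ m) - f (k / 2 ^ m)‖ ≤ a m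

namespace DyadicIncrementsLE

variable {f : ℝ → E} {a : ℕ → ℝ}

theorem bound_nonneg (hf : DyadicIncrementsLE f a) (m : ℕ) : 0 ≤ a m :=
  (norm_nonneg _).trans (hf m 0 (by positivity))

theorem norm_sub_le_sum (hf : DyadicIncrementsLE f a) (m k : ℕ) (hk : k ≤ 2 ^ m) :
    ‖f (k / 2 ^ m) - f 0‖ ≤ ∑ i ∈ Finset.range (m + 1), a i := by
  induction m generalizing k with
  | zero =>
    obtain rfl | rfl : k = 0 ∨ k = 1 := by grind
    · simpa using hf.bound_nonneg 0
    · simpa using hf 0 0 (by simp)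
  | succ m ih =>
    have coarsen (l : ℕ) : ((2 * l : ℕ) : ℝ) / 2 ^ (m + 1) = l / 2 ^ m := by
      push_cast
      field_simp
      ring
    rw [Finset.sum_range_succ]
    rcases Nat.even_or_odd' k with ⟨l, rfl | rfl⟩
    · rw [coarsen]
      linarith [ih l (by grind), hf.bound_nonneg (m + 1)]
    · have last_step := hf (m + 1) (2 * l) (by grind)
      rw [coarsen, ← Nat.cast_succ] at last_step
      calc ‖f ((2 * l + 1 : ℕ) / 2 ^ (m + 1)) - f 0‖
          ≤ ‖f ((2 * l + 1 : ℕ) / 2 ^ (m + 1)) - f (l / 2 ^ m)‖ + ‖f (l / 2 ^ m) - f 0‖ :=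
            norm_sub_le_norm_sub_add_norm_sub _ _ _
        _ ≤ a (m + 1) + ∑ i ∈ Finset.range (m + 1), a i :=
            add_le_add last_step (ih l (by grind))
        _ = _ := add_comm _ _

theorem norm_sub_le_tsum (hf : DyadicIncrementsLE f a) (hcont : ContinuousOn f (Set.Icc 0 1))
    (ha : Summable a) {t : ℝ} (ht : t ∈ Set.Icc (0 : ℝ) 1) : ‖f t - f 0‖ ≤ ∑' m, a m := by
  have floor_le (m : ℕ) : ⌊t * 2 ^ m⌋₊ ≤ 2 ^ m := by
    refine Nat.floor_le_of_le ?_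
    push_cast
    exact mul_le_of_le_one_left (by positivity) ht.2
  have approx_mem (m : ℕ) : (⌊t * 2 ^ m⌋₊ : ℝ) / 2 ^ m ∈ Set.Icc (0 : ℝ) 1 :=
    ⟨by positivity, div_le_one_of_le₀ (mod_cast floor_le m) (by positivity)⟩
  have approx_tendsto :
      Filter.Tendsto (fun m : ℕ ↦ (⌊t * 2 ^ m⌋₊ : ℝ) / 2 ^ m) Filter.atTop (nhds t) :=
    (tendsto_nat_floor_mul_div_atTop ht.1).comp
      (tendsto_pow_atTop_atTop_of_one_lt (one_lt_two (α := ℝ)))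
  have values_tendsto := (hcont t ht).tendsto.comp
    (tendsto_nhdsWithin_iff.2 ⟨approx_tendsto, .of_forall approx_mem⟩)
  refine le_of_tendsto' (values_tendsto.sub_const (f 0)).norm fun m ↦ ?_
  exact (hf.norm_sub_le_sum m _ (floor_le m)).trans
    (ha.sum_le_tsum _ fun i _ ↦ hf.bound_nonneg i)

end DyadicIncrementsLE

end DyadicChaining

section Grid

variable {E : Type*} [SeminormedAddCommGroup E]

/-- The path `f`, observed on the grid of mesh `δ` with `n` cells `[δ * j, δ * (j + 1)]`, has all
its cell increments in `A`, and inside each cell, rescaled to `[0, 1]`, its dyadic increments of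
level `m` are bounded by `a m`. -/
def GridControlled (δ : ℝ) (n : ℕ) (A : Set E) (a : ℕ → ℝ) (f : ℝ → E) : Prop :=
  ∀ j < n, f (δ * (j + 1)) - f (δ * j) ∈ A ∧ DyadicIncrementsLE (fun x ↦ f (δ * (j + x))) a

theorem norm_sub_sub_nsmul_le {g : ℕ → E} {u : E} {ρ : ℝ} {n : ℕ}
    (hg : ∀ i < n, g (i + 1) - g i ∈ Metric.closedBall u ρ) :
    ‖g n - g 0 - n • u‖ ≤ n * ρ := by
  have telescope : g n - g 0 - n • u = ∑ i ∈ Finset.range n, (g (i + 1) - g i - u) := by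
    rw [Finset.sum_sub_distrib, Finset.sum_range_sub]
    simp
  rw [telescope]
  refine (norm_sum_le_of_le _ (f := fun i ↦ g (i + 1) - g i - u) (n := fun _ ↦ ρ)
    fun i hi ↦ ?_).trans_eq (by simp)
  exact mem_closedBall_iff_norm.1 (hg i (Finset.mem_range.1 hi))

theorem exists_grid_cell {δ t : ℝ} (hδ : 0 < δ) {n : ℕ} (hn : 0 < n)
    (ht : t ∈ Set.Icc 0 (δ * n)) : ∃ j < n, ∃ x ∈ Set.Icc (0 : ℝ) 1, t = δ * (j + x) := by
  obtain ⟨ht0, htn⟩ := ht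
  rcases htn.lt_or_eq with hlt | rfl
  · have hquot : 0 ≤ t / δ := by positivity
    have hlt_n : ⌊t / δ⌋₊ < n := (Nat.floor_lt hquot).2 ((div_lt_iff₀' hδ).2 hlt)
    refine ⟨⌊t / δ⌋₊, hlt_n, t / δ - ⌊t / δ⌋₊, ⟨?_, ?_⟩, ?_⟩
    · linarith [Nat.floor_le hquot]
    · linarith [Nat.lt_floor_add_one (t / δ)]
    · field_simp
      ring
  · refine ⟨n - 1, by lia, 1, by simp, ?_⟩
    rw [Nat.cast_pred hn]
    ring

theorem GridControlled.norm_sub_smul_le [NormedSpace ℝ E] {δ ρ : ℝ} {n : ℕ} {u : E} {a : ℕ → ℝ}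
    {f : ℝ → E} (hf : GridControlled δ n (Metric.closedBall u ρ) a f) (hcont : Continuous f)
    (hf0 : f 0 = 0) (hδ : 0 < δ) (hρ : 0 ≤ ρ) (hn : 0 < n) (ha : Summable a) {t : ℝ}
    (ht : t ∈ Set.Icc 0 (δ * n)) :
    ‖f t - (t / δ) • u‖ ≤ n * ρ + ∑' m, a m + ‖u‖ := by
  obtain ⟨j, hj, x, hx, rfl⟩ := exists_grid_cell hδ hn ht
  have grid_error : ‖f (δ * j) - j • u‖ ≤ n * ρ := by
    have := norm_sub_sub_nsmul_le (g := fun i : ℕ ↦ f (δ * i)) (n := j) (u := u) (ρ := ρ)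
      fun i hi ↦ by simpa using (hf i (hi.trans hj)).1
    simp only [Nat.cast_zero, mul_zero, hf0, sub_zero] at this
    exact this.trans (by gcongr)
  have cell_oscillation : ‖f (δ * (j + x)) - f (δ * j)‖ ≤ ∑' m, a m := by
    simpa using (hf j hj).2.norm_sub_le_tsum (by fun_prop) ha hx
  have drift_in_cell : ‖x • u‖ ≤ ‖u‖ := by
    rw [norm_smul, Real.norm_of_nonneg hx.1]
    exact mul_le_of_le_one_left (norm_nonneg u) hx.2
  calc ‖f (δ * (j + x)) - (δ * (j + x) / δ) • u‖
      = ‖(f (δ * j) - j • u) + (f (δ * (j + x)) - f (δ * j)) - x • u‖ := by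
        rw [mul_div_cancel_left₀ _ hδ.ne', add_smul, Nat.cast_smul_eq_nsmul]
        congr 1
        abel
    _ ≤ ‖f (δ * j) - j • u‖ + ‖f (δ * (j + x)) - f (δ * j)‖ + ‖x • u‖ :=
        (norm_sub_le _ _).trans (by gcongr; exact norm_add_le _ _)
    _ ≤ n * ρ + ∑' m, a m + ‖u‖ := by gcongr

theorem measurableSet_gridControlled {Ω : Type*} {mΩ : MeasurableSpace Ω} [MeasurableSpace E]
    [OpensMeasurableSpace E] [MeasurableSub₂ E] {X : ℝ → Ω → E} (hX : ∀ t, Measurable (X t))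
    {A : Set E} (hA : MeasurableSet A) (δ : ℝ) (n : ℕ) (a : ℕ → ℝ) :
    MeasurableSet {ω | GridControlled δ n A a (X · ω)} := by
  have increment (s t : ℝ) : Measurable fun ω ↦ X t ω - X s ω := (hX t).sub (hX s)
  simp only [GridControlled, DyadicIncrementsLE, Set.ofPred_forall, Set.ofPred_and]
  exact .iInter fun j ↦ .iInter fun _ ↦ (increment _ _ hA).inter <|
    .iInter fun m ↦ .iInter fun k ↦ .iInter fun _ ↦
      measurableSet_le (continuous_norm.measurable.comp (increment _ _)) measurable_const

end Grid

section IndependentIncrements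

variable {Ω E : Type*} {mΩ : MeasurableSpace Ω} {P : Measure Ω} [MeasurableSpace E]

theorem iIndepFun_of_indep_past [IsProbabilityMeasure P] {ι : Type*} [LinearOrder ι]
    {Y : ι → Ω → E}
    (hY : ∀ i, Indep (MeasurableSpace.comap (Y i) inferInstance)
      (⨆ k < i, MeasurableSpace.comap (Y k) inferInstance) P) :
    iIndepFun Y P := by
  refine iIndepFun_iff_measure_inter_preimage_eq_mul.2 fun S A hA ↦ ?_
  induction S using Finset.induction_on_max with
  | empty => simp
  | insert i S hlt ih =>
    simp only [Finset.mem_insert, forall_eq_or_imp] at hA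
    have past_event : MeasurableSet[⨆ k < i, MeasurableSpace.comap (Y k) inferInstance]
        (⋂ k ∈ S, Y k ⁻¹' A k) :=
      Finset.measurableSet_biInter _ fun k hk ↦
        le_iSup₂ (f := fun k (_ : k < i) ↦ MeasurableSpace.comap (Y k) inferInstance) k (hlt k hk)
          _ ⟨A k, hA.2 k hk, rfl⟩
    rw [Finset.set_biInter_insert, Finset.prod_insert fun hi ↦ (hlt i hi).false, ← ih hA.2]
    exact (Indep_iff _ _ _).1 (hY i) _ _ ⟨A i, hA.1, rfl⟩ past_event

theorem hasIndepIncrements_of_indep_past [IsProbabilityMeasure P] {T : Type*} [Preorder T] [Sub E]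
    [MeasurableSub₂ E] {X : T → Ω → E}
    (hX : ∀ s t, s ≤ t → Indep (MeasurableSpace.comap (fun ω ↦ X t ω - X s ω) inferInstance)
      (⨆ u ≤ s, MeasurableSpace.comap (X u) inferInstance) P) :
    HasIndepIncrements X P := by
  refine .of_nat fun t ht _ ↦ iIndepFun_of_indep_past fun i ↦
    indep_of_indep_of_le_right (hX _ _ (ht i.le_succ)) (iSup₂_le fun k hk ↦ ?_)
  have measurable_past (u : T) (hu : u ≤ t i) :
      Measurable[⨆ u ≤ t i, MeasurableSpace.comap (X u) inferInstance] (X u) :=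
    measurable_iff_comap_le.2 <|
      le_iSup₂ (f := fun u (_ : u ≤ t i) ↦ MeasurableSpace.comap (X u) inferInstance) u hu
  exact ((measurable_past _ (ht hk)).sub (measurable_past _ (ht hk.le))).comap_le

theorem iIndepFun_sub_of_hasIndepIncrements {T : Type*} [Preorder T] [Sub E] {X : T → Ω → E}
    (hX : HasIndepIncrements X P) {a b : ℕ → T} (hab : ∀ i, a i ≤ b i)
    (hba : ∀ i, b i ≤ a (i + 1)) :
    iIndepFun (fun i ω ↦ X (b i) ω - X (a i) ω) P := by
  let endpoint (i : ℕ) : T := if Even i then a (i / 2) else b (i / 2)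
  have endpoint_even (i : ℕ) : endpoint (2 * i) = a i := by simp [endpoint]
  have endpoint_odd (i : ℕ) : endpoint (2 * i + 1) = b i := by
    simp [endpoint, Nat.mul_add_div]
  have endpoint_mono : Monotone endpoint := monotone_nat_of_le_succ fun i ↦ by
    rcases Nat.even_or_odd' i with ⟨l, rfl | rfl⟩
    · simpa only [endpoint_even, endpoint_odd] using hab l
    · rw [endpoint_odd, show 2 * l + 1 + 1 = 2 * (l + 1) by ring, endpoint_even]
      exact hba l
  simpa only [endpoint_even, endpoint_odd] using
    (hX.nat endpoint_mono).precomp (mul_right_injective₀ two_ne_zero)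

/-- The process `X`, run over the nonnegative times, has independent increments, and its increments
over intervals of length `t` have law `ν t`. Times are real for the convenience of arithmetic. -/
structure HasStationaryIndepIncrements [Sub E] (X : ℝ → Ω → E) (ν : ℝ → Measure E)
    (P : Measure Ω) : Prop where
  hasIndepIncrements : HasIndepIncrements (fun t : ℝ≥0 ↦ X t) P
  hasLaw_sub : ∀ s t, 0 ≤ s → s < t → HasLaw (fun ω ↦ X t ω - X s ω) (ν (t - s)) P

namespace HasStationaryIndepIncrements

variable {X : ℝ → Ω → E} {ν : ℝ → Measure E}

theorem measure_forall_sub_mem [Sub E] (hX : HasStationaryIndepIncrements X ν P) {a b : ℕ → ℝ}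
    (ha : ∀ i, 0 ≤ a i) (hab : ∀ i, a i < b i) (hba : ∀ i, b i ≤ a (i + 1))
    {A : ℕ → Set E} (hA : ∀ i, MeasurableSet (A i)) (n : ℕ) :
    P {ω | ∀ i < n, X (b i) ω - X (a i) ω ∈ A i} =
      ∏ i ∈ Finset.range n, ν (b i - a i) (A i) := by
  have hindep : iIndepFun (fun i ω ↦ X (b i) ω - X (a i) ω) P := by
    have hb (i : ℕ) : 0 ≤ b i := (ha i).trans (hab i).le
    lift a to ℕ → ℝ≥0 using ha
    lift b to ℕ → ℝ≥0 using hb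
    exact iIndepFun_sub_of_hasIndepIncrements hX.hasIndepIncrements
      (fun i ↦ mod_cast (hab i).le) (fun i ↦ mod_cast hba i)
  have factor (i : ℕ) : P ((fun ω ↦ X (b i) ω - X (a i) ω) ⁻¹' A i) = ν (b i - a i) (A i) :=
    (hX.hasLaw_sub _ _ (ha i) (hab i)).measure_eq (hA i)
  have hinter := hindep.measure_inter_preimage_eq_mul (Finset.range n) fun i _ ↦ hA i
  simp only [factor] at hinter
  rw [← hinter]
  congr 1
  ext ω
  simp

variable {δ : ℝ} {A : Set E}

theorem measure_grid [Sub E] (hX : HasStationaryIndepIncrements X ν P) (hδ : 0 < δ)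
    (hA : MeasurableSet A) (n : ℕ) :
    P {ω | ∀ i < n, X (δ * (i + 1)) ω - X (δ * i) ω ∈ A} = ν δ A ^ n := by
  have mesh (i : ℕ) : δ * (i + 1) - δ * i = δ := by ring
  rw [hX.measure_forall_sub_mem (a := fun i ↦ δ * i) (b := fun i ↦ δ * (i + 1))
    (fun i ↦ by positivity) (fun i ↦ by linarith [mesh i]) (fun i ↦ by push_cast; rfl) (fun _ ↦ hA)]
  simp [mesh]

theorem measure_grid_update [Sub E] (hX : HasStationaryIndepIncrements X ν P) (hδ : 0 < δ)
    (hA : MeasurableSet A) {B : Set E} (hB : MeasurableSet B) {n j : ℕ} (hj : j < n) {x y : ℝ}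
    (hx : δ * j ≤ x) (hxy : x < y) (hy : y ≤ δ * (j + 1)) :
    P {ω | X y ω - X x ω ∈ B ∧ ∀ i < n, i ≠ j → X (δ * (i + 1)) ω - X (δ * i) ω ∈ A} =
      ν δ A ^ (n - 1) * ν (y - x) B := by
  have mesh (i : ℕ) : δ * (i + 1) - δ * i = δ := by ring
  let a := Function.update (fun i : ℕ ↦ δ * i) j x
  let b := Function.update (fun i : ℕ ↦ δ * (i + 1)) j y
  let D := Function.update (fun _ ↦ A) j B
  have left_le (i : ℕ) : δ * i ≤ a i := by
    rcases eq_or_ne i j with rfl | hij <;> simp [a, *]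
  have le_right (i : ℕ) : b i ≤ δ * (i + 1) := by
    rcases eq_or_ne i j with rfl | hij <;> simp [b, *]
  have hab (i : ℕ) : a i < b i := by
    rcases eq_or_ne i j with rfl | hij <;> simp [a, b, *]
  have hba (i : ℕ) : b i ≤ a (i + 1) := (le_right i).trans (mod_cast left_le (i + 1))
  have hD (i : ℕ) : MeasurableSet (D i) := by
    rcases eq_or_ne i j with rfl | hij <;> simp [D, *]
  have factor (i : ℕ) :
      ν (b i - a i) (D i) = Function.update (fun _ ↦ ν δ A) j (ν (y - x) B) i := by
    rcases eq_or_ne i j with rfl | hij <;> simp [a, b, D, *]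
  calc P {ω | X y ω - X x ω ∈ B ∧ ∀ i < n, i ≠ j → X (δ * (i + 1)) ω - X (δ * i) ω ∈ A}
      = P {ω | ∀ i < n, X (b i) ω - X (a i) ω ∈ D i} := by
        congr 1
        ext ω
        simp only [Set.mem_ofPred_eq]
        refine ⟨fun ⟨hωB, hωA⟩ i hi ↦ ?_, fun hω ↦ ⟨?_, fun i hi hij ↦ ?_⟩⟩
        · rcases eq_or_ne i j with rfl | hij <;> simp [a, b, D, *]
        · simpa [a, b, D] using hω j hj
        · simpa [a, b, D, hij] using hω i hi
    _ = ∏ i ∈ Finset.range n, ν (b i - a i) (D i) :=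
        hX.measure_forall_sub_mem (fun i ↦ (by positivity : 0 ≤ δ * i).trans (left_le i))
          hab hba hD n
    _ = ν δ A ^ (n - 1) * ν (y - x) B := by
        simp only [factor]
        rw [Finset.prod_update_of_mem (Finset.mem_range.2 hj), Finset.prod_const,
          Finset.card_sdiff_of_subset (by simpa using hj), Finset.card_range,
          Finset.card_singleton, mul_comm]

theorem measure_cell_increment_lt_norm_le [SeminormedAddCommGroup E] [OpensMeasurableSpace E]
    (hX : HasStationaryIndepIncrements X ν P) (hδ : 0 < δ) (hA : MeasurableSet A) {n j : ℕ}
    (hj : j < n) (ε : ℝ) {m k : ℕ} (hk : k < 2 ^ m) :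
    P {ω | (∀ i < n, X (δ * (i + 1)) ω - X (δ * i) ω ∈ A) ∧
        ε < ‖X (δ * (j + (k + 1) / 2 ^ m)) ω - X (δ * (j + k / 2 ^ m)) ω‖} ≤
      ν δ A ^ (n - 1) * ν (δ / 2 ^ m) {z | ε < ‖z‖} := by
  have length : δ * (j + (k + 1) / 2 ^ m) - δ * (j + k / 2 ^ m) = δ / 2 ^ m := by ring
  have length_pos : 0 < δ / 2 ^ m := by positivity
  have right_le : δ * (j + ((k : ℝ) + 1) / 2 ^ m) ≤ δ * (j + 1) := by
    gcongr
    exact div_le_one_of_le₀ (mod_cast hk) (by positivity)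
  have left_ge : δ * j ≤ δ * (j + (k : ℝ) / 2 ^ m) := by
    gcongr
    exact le_add_of_nonneg_right (by positivity)
  rw [← length, ← hX.measure_grid_update hδ hA
    (measurableSet_lt measurable_const continuous_norm.measurable) hj left_ge (by linarith)
    right_le]
  -- Dropping the constraint on the `j`-th cell leaves increments over disjoint intervals.
  exact measure_mono fun ω ⟨hgrid, hlarge⟩ ↦ ⟨hlarge, fun i hi _ ↦ hgrid i hi⟩

theorem measure_grid_sdiff_gridControlled_le [SeminormedAddCommGroup E] [OpensMeasurableSpace E]
    (hX : HasStationaryIndepIncrements X ν P) (hδ : 0 < δ) (hA : MeasurableSet A) (n : ℕ)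
    (a : ℕ → ℝ) :
    P ({ω | ∀ i < n, X (δ * (i + 1)) ω - X (δ * i) ω ∈ A} \
        {ω | GridControlled δ n A a (X · ω)}) ≤
      n * (ν δ A ^ (n - 1) * ∑' m : ℕ, 2 ^ m * ν (δ / 2 ^ m) {z | a m < ‖z‖}) := by
  let bad (j m k : ℕ) : Set Ω := {ω | (∀ i < n, X (δ * (i + 1)) ω - X (δ * i) ω ∈ A) ∧
    a m < ‖X (δ * (j + (k + 1) / 2 ^ m)) ω - X (δ * (j + k / 2 ^ m)) ω‖}
  calc P ({ω | ∀ i < n, X (δ * (i + 1)) ω - X (δ * i) ω ∈ A} \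
        {ω | GridControlled δ n A a (X · ω)})
      ≤ P (⋃ j ∈ Finset.range n, ⋃ m, ⋃ k ∈ Finset.range (2 ^ m), bad j m k) := by
        refine measure_mono fun ω ⟨hgrid, hω⟩ ↦ ?_
        simp only [GridControlled, DyadicIncrementsLE, Set.mem_ofPred_eq] at hgrid hω
        push Not at hω
        obtain ⟨j, hj, hcell⟩ := hω
        obtain ⟨m, k, hk, hlarge⟩ := hcell (hgrid j hj)
        simp only [Set.mem_iUnion, Finset.mem_range]
        exact ⟨j, hj, m, k, hk, hgrid, hlarge⟩
    _ ≤ ∑ j ∈ Finset.range n, ∑' m, ∑ k ∈ Finset.range (2 ^ m), P (bad j m k) :=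
        (measure_biUnion_finset_le _ _).trans <| Finset.sum_le_sum fun j _ ↦
          (measure_iUnion_le _).trans <| ENNReal.tsum_le_tsum fun m ↦
            measure_biUnion_finset_le _ _
    _ ≤ ∑ _j ∈ Finset.range n, ∑' m : ℕ, ∑ _k ∈ Finset.range (2 ^ m),
          ν δ A ^ (n - 1) * ν (δ / 2 ^ m) {z | a m < ‖z‖} := by
        gcongr with _ hj _ _ hk
        exact hX.measure_cell_increment_lt_norm_le hδ hA (Finset.mem_range.1 hj) _
          (Finset.mem_range.1 hk)
    _ = n * (ν δ A ^ (n - 1) * ∑' m : ℕ, 2 ^ m * ν (δ / 2 ^ m) {z | a m < ‖z‖}) := by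
        simp only [Finset.sum_const, Finset.card_range, nsmul_eq_mul, Nat.cast_pow,
          Nat.cast_ofNat, ← ENNReal.tsum_mul_left, mul_left_comm]

theorem le_measure_gridControlled [IsFiniteMeasure P] [SeminormedAddCommGroup E]
    [OpensMeasurableSpace E] (hX : HasStationaryIndepIncrements X ν P) (hδ : 0 < δ)
    (hA : MeasurableSet A) {n : ℕ} (hn : 0 < n) {a : ℕ → ℝ}
    (ha : n * ∑' m : ℕ, 2 ^ m * ν (δ / 2 ^ m) {z | a m < ‖z‖} ≤ ν δ A / 2) :
    ν δ A ^ n / 2 ≤ P {ω | GridControlled δ n A a (X · ω)} := by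
  have grid_ne_top : ν δ A ^ n ≠ ∞ := hX.measure_grid hδ hA n ▸ measure_ne_top P _
  have bad_le : P ({ω | ∀ i < n, X (δ * (i + 1)) ω - X (δ * i) ω ∈ A} \
      {ω | GridControlled δ n A a (X · ω)}) ≤ ν δ A ^ n / 2 :=
    calc P ({ω | ∀ i < n, X (δ * (i + 1)) ω - X (δ * i) ω ∈ A} \
          {ω | GridControlled δ n A a (X · ω)})
        ≤ n * (ν δ A ^ (n - 1) * ∑' m : ℕ, 2 ^ m * ν (δ / 2 ^ m) {z | a m < ‖z‖}) :=
          hX.measure_grid_sdiff_gridControlled_le hδ hA n a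
      _ = ν δ A ^ (n - 1) * (n * ∑' m : ℕ, 2 ^ m * ν (δ / 2 ^ m) {z | a m < ‖z‖}) :=
          mul_left_comm _ _ _
      _ ≤ ν δ A ^ (n - 1) * (ν δ A / 2) := by gcongr
      _ = ν δ A ^ n / 2 := by rw [← mul_div_assoc, ← pow_succ, Nat.sub_add_cancel hn]
  calc ν δ A ^ n / 2 = ν δ A ^ n - ν δ A ^ n / 2 := (ENNReal.sub_half grid_ne_top).symm
    _ ≤ P {ω | ∀ i < n, X (δ * (i + 1)) ω - X (δ * i) ω ∈ A} -
          P ({ω | ∀ i < n, X (δ * (i + 1)) ω - X (δ * i) ω ∈ A} \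
            {ω | GridControlled δ n A a (X · ω)}) := by
        rw [hX.measure_grid hδ hA]
        gcongr
    _ ≤ P {ω | GridControlled δ n A a (X · ω)} :=
        tsub_le_iff_right.2 <| (measure_le_inter_add_sdiff P _ _).trans <| by
          gcongr
          exact Set.inter_subset_right

end HasStationaryIndepIncrements

end IndependentIncrements

section GaussianPlane

variable {s : ℝ}

theorem integral_gaussianPlane_density (hs : 0 < s) :
    ∫ z : EuclideanSpace ℝ (Fin 2), (2 * π * s)⁻¹ * rexp (-‖z‖ ^ 2 / (2 * s)) = 1 := by
  have exponent (x : ℝ) : -x ^ 2 / (2 * s) = -(2 * s)⁻¹ * x ^ 2 := by ring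
  simp only [exponent, integral_const_mul]
  rw [GaussianFourier.integral_rexp_neg_mul_sq_norm (by positivity)]
  simp
  field_simp

theorem gaussianPlane_univ (hs : 0 < s) : gaussianPlane s Set.univ = 1 := by
  have integral_eq_one := integral_gaussianPlane_density hs
  rw [gaussianPlane, withDensity_apply _ .univ, Measure.restrict_univ,
    ← ofReal_integral_eq_lintegral_ofReal (integrable_of_integral_eq_one integral_eq_one)
      (.of_forall fun z ↦ by positivity), integral_eq_one, ENNReal.ofReal_one]

theorem gaussianPlane_lt_norm_le_exp (hs : 0 < s) {a : ℝ} (ha : 0 ≤ a) :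
    gaussianPlane s {z | a < ‖z‖} ≤ ENNReal.ofReal (2 * rexp (-(a ^ 2 / (4 * s)))) := by
  have tail_measurable : MeasurableSet {z : EuclideanSpace ℝ (Fin 2) | a < ‖z‖} :=
    measurableSet_lt measurable_const measurable_norm
  -- Half of the exponent is bounded on the tail, the other half gives `gaussianPlane (2 * s)`.
  have density_le (z : EuclideanSpace ℝ (Fin 2)) (hz : a < ‖z‖) :
      (2 * π * s)⁻¹ * rexp (-‖z‖ ^ 2 / (2 * s)) ≤ 2 * rexp (-(a ^ 2 / (4 * s))) *
        ((2 * π * (2 * s))⁻¹ * rexp (-‖z‖ ^ 2 / (2 * (2 * s)))) :=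
    calc (2 * π * s)⁻¹ * rexp (-‖z‖ ^ 2 / (2 * s))
        = 2 * rexp (-(‖z‖ ^ 2 / (4 * s))) *
            ((2 * π * (2 * s))⁻¹ * rexp (-‖z‖ ^ 2 / (2 * (2 * s)))) := by
          rw [show -‖z‖ ^ 2 / (2 * s) = -(‖z‖ ^ 2 / (4 * s)) + -‖z‖ ^ 2 / (2 * (2 * s)) by
            field_simp; ring, Real.exp_add]
          field_simp
      _ ≤ _ := by gcongr
  calc gaussianPlane s {z | a < ‖z‖}
      ≤ ∫⁻ z in {z | a < ‖z‖}, ENNReal.ofReal (2 * rexp (-(a ^ 2 / (4 * s)))) *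
          ENNReal.ofReal ((2 * π * (2 * s))⁻¹ * rexp (-‖z‖ ^ 2 / (2 * (2 * s)))) := by
        rw [gaussianPlane, withDensity_apply _ tail_measurable]
        refine setLIntegral_mono' tail_measurable fun z hz ↦ ?_
        rw [← ENNReal.ofReal_mul (by positivity)]
        exact ENNReal.ofReal_le_ofReal (density_le z hz)
    _ = ENNReal.ofReal (2 * rexp (-(a ^ 2 / (4 * s)))) *
          gaussianPlane (2 * s) {z | a < ‖z‖} := by
        rw [lintegral_const_mul' _ _ ENNReal.ofReal_ne_top, gaussianPlane,
          withDensity_apply _ tail_measurable]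
    _ ≤ ENNReal.ofReal (2 * rexp (-(a ^ 2 / (4 * s)))) := by
        refine mul_le_of_le_one_right' ?_
        exact (measure_mono (Set.subset_univ _)).trans (gaussianPlane_univ (by positivity)).le

theorem gaussianPlane_lt_norm_le (hs : 0 < s) {a : ℝ} (ha : 0 < a) :
    gaussianPlane s {z | a < ‖z‖} ≤ ENNReal.ofReal (12 * (4 * s / a ^ 2) ^ 3) := by
  refine (gaussianPlane_lt_norm_le_exp hs ha.le).trans (ENNReal.ofReal_le_ofReal ?_)
  calc 2 * rexp (-(a ^ 2 / (4 * s)))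
      = 2 * (rexp (a ^ 2 / (4 * s)))⁻¹ := by rw [Real.exp_neg]
    _ ≤ 2 * ((a ^ 2 / (4 * s)) ^ 3 / Nat.factorial 3)⁻¹ := by
        gcongr
        exact Real.pow_div_factorial_le_exp _ (by positivity) 3
    _ = 12 * (4 * s / a ^ 2) ^ 3 := by
        norm_num [Nat.factorial]
        field_simp
        norm_num

theorem le_gaussianPlane_closedBall (hs : 0 < s) {R ρ : ℝ} (hρ : 0 ≤ ρ)
    {x : EuclideanSpace ℝ (Fin 2)} (hR : ‖x‖ + ρ ≤ R) :
    ENNReal.ofReal (rexp (-R ^ 2 / (2 * s)) * ρ ^ 2 / (2 * s)) ≤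
      gaussianPlane s (Metric.closedBall x ρ) := by
  have norm_le (z : EuclideanSpace ℝ (Fin 2)) (hz : z ∈ Metric.closedBall x ρ) : ‖z‖ ≤ R := by
    linarith [norm_le_norm_add_norm_sub' z x, mem_closedBall_iff_norm.1 hz]
  calc ENNReal.ofReal (rexp (-R ^ 2 / (2 * s)) * ρ ^ 2 / (2 * s))
      = ENNReal.ofReal ((2 * π * s)⁻¹ * rexp (-R ^ 2 / (2 * s))) *
          volume (Metric.closedBall x ρ) := by
        rw [EuclideanSpace.volume_closedBall_fin_two, ← ENNReal.ofReal_pow hρ,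
          ← ENNReal.ofReal_mul (by positivity), ← ENNReal.ofReal_mul (by positivity)]
        congr 1
        field_simp
    _ = ∫⁻ _ in Metric.closedBall x ρ,
          ENNReal.ofReal ((2 * π * s)⁻¹ * rexp (-R ^ 2 / (2 * s))) :=
        (setLIntegral_const _ _).symm
    _ ≤ gaussianPlane s (Metric.closedBall x ρ) := by
        rw [gaussianPlane, withDensity_apply _ Metric.isClosed_closedBall.measurableSet]
        refine setLIntegral_mono' Metric.isClosed_closedBall.measurableSet fun z hz ↦ ?_
        gcongr
        exact norm_le z hz

-- Any ratio `q` with `4⁻¹ < q ^ 6 < 1` could replace `7 / 8`: the bounds on the increments and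
-- the tail masses are then both summable over the levels.
theorem two_pow_mul_gaussianPlane_lt_norm_le {δ b : ℝ} (hδ : 0 < δ) (hb : 0 < b) (m : ℕ) :
    2 ^ m * gaussianPlane (δ / 2 ^ m) {z | b * (7 / 8) ^ m < ‖z‖} ≤
      ENNReal.ofReal (12 * (4 * δ / b ^ 2) ^ 3 * (4 / 7) ^ m) := by
  have two_pow : (2 : ℝ≥0∞) ^ m = ENNReal.ofReal (2 ^ m) := by
    rw [ENNReal.ofReal_pow zero_le_two, ENNReal.ofReal_ofNat]
  calc 2 ^ m * gaussianPlane (δ / 2 ^ m) {z | b * (7 / 8) ^ m < ‖z‖}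
      ≤ 2 ^ m * ENNReal.ofReal (12 * (4 * (δ / 2 ^ m) / (b * (7 / 8) ^ m) ^ 2) ^ 3) := by
        gcongr
        exact gaussianPlane_lt_norm_le (by positivity) (by positivity)
    _ = ENNReal.ofReal (12 * (4 * δ / b ^ 2) ^ 3 * (2 * (1 / 2) ^ 3 * (8 / 7) ^ 6) ^ m) := by
        rw [two_pow, ← ENNReal.ofReal_mul (by positivity)]
        congr 1
        simp only [mul_pow, div_pow, one_pow, ← pow_mul]
        field_simp
        ring
    _ ≤ ENNReal.ofReal (12 * (4 * δ / b ^ 2) ^ 3 * (4 / 7) ^ m) := by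
        gcongr
        norm_num

theorem tsum_two_pow_mul_gaussianPlane_lt_norm_le {δ b : ℝ} (hδ : 0 < δ) (hb : 0 < b) :
    ∑' m : ℕ, 2 ^ m * gaussianPlane (δ / 2 ^ m) {z | b * (7 / 8) ^ m < ‖z‖} ≤
      ENNReal.ofReal (28 * (4 * δ / b ^ 2) ^ 3) := by
  have geometric := (hasSum_geometric_of_lt_one (r := (4 / 7 : ℝ)) (by norm_num)
    (by norm_num)).mul_left (12 * (4 * δ / b ^ 2) ^ 3)
  calc ∑' m : ℕ, 2 ^ m * gaussianPlane (δ / 2 ^ m) {z | b * (7 / 8) ^ m < ‖z‖}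
      ≤ ∑' m : ℕ, ENNReal.ofReal (12 * (4 * δ / b ^ 2) ^ 3 * (4 / 7) ^ m) :=
        ENNReal.tsum_le_tsum (two_pow_mul_gaussianPlane_lt_norm_le hδ hb)
    _ = ENNReal.ofReal (28 * (4 * δ / b ^ 2) ^ 3) := by
        rw [← ENNReal.ofReal_tsum_of_nonneg (fun m ↦ by positivity) geometric.summable,
          geometric.tsum_eq]
        congr 1
        ring

end GaussianPlane

theorem IsPlanarBM.hasStationaryIndepIncrements {Ω : Type*} [MeasureSpace Ω]
    [IsProbabilityMeasure (ℙ : Measure Ω)] {W : ℝ → Ω → EuclideanSpace ℝ (Fin 2)}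
    (hW : IsPlanarBM W) : HasStationaryIndepIncrements W gaussianPlane ℙ where
  hasIndepIncrements := hasIndepIncrements_of_indep_past fun s t hst ↦
    indep_of_indep_of_le_right (hW.incr_indep s t s.2 (mod_cast hst)) <|
      iSup₂_le fun u hu ↦ le_iSup₂_of_le (u : ℝ) ⟨u.2, mod_cast hu⟩ le_rfl
  hasLaw_sub s t hs hst :=
    ⟨((hW.measurable t).sub (hW.measurable s)).aemeasurable, hW.incr_law s t hs hst⟩

section DiffusiveScale

variable {r η : ℝ} {n : ℕ}

theorem GridControlled.norm_sub_smul_le_of_diffusive {E : Type*} [SeminormedAddCommGroup E]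
    [NormedSpace ℝ E] {v : E} {f : ℝ → E}
    (hf : GridControlled (r ^ 2 / n) n (Metric.closedBall ((n : ℝ)⁻¹ • v) (η * r / n))
      (fun m ↦ η * r * (7 / 8) ^ m) f)
    (hcont : Continuous f) (hf0 : f 0 = 0) (hr : 0 < r) (hη : 0 < η) (hn : 0 < n)
    (hv : ‖v‖ ≤ η * r * n) {t : ℝ} (ht : t ∈ Set.Icc 0 (r ^ 2)) :
    ‖f t - (t / r ^ 2) • v‖ ≤ 10 * η * r := by
  have geometric := (hasSum_geometric_of_lt_one (r := (7 / 8 : ℝ)) (by norm_num)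
    (by norm_num)).mul_left (η * r)
  have drift_in_cell : ‖(n : ℝ)⁻¹ • v‖ ≤ η * r := by
    rw [norm_smul, norm_inv, RCLike.norm_natCast]
    exact inv_mul_le_of_le_mul₀ (by positivity) (by positivity) (by rwa [mul_comm])
  have slope : (t / (r ^ 2 / n)) • (n : ℝ)⁻¹ • v = (t / r ^ 2) • v := by
    rw [smul_smul]
    congr 1
    field_simp
  calc ‖f t - (t / r ^ 2) • v‖
      ≤ n * (η * r / n) + ∑' m : ℕ, η * r * (7 / 8) ^ m + ‖(n : ℝ)⁻¹ • v‖ := by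
        rw [← slope]
        exact hf.norm_sub_smul_le hcont hf0 (by positivity) (by positivity) hn geometric.summable
          (by rwa [div_mul_cancel₀ _ (by positivity)])
    _ = η * r + 8 * (η * r) + ‖(n : ℝ)⁻¹ • v‖ := by
        rw [mul_div_cancel₀ _ (by positivity), geometric.tsum_eq]
        ring
    _ ≤ 10 * η * r := by linarith

theorem le_gaussianPlane_closedBall_of_diffusive (hr : 0 < r) (hη : 0 < η) (hn : 0 < n) {κ : ℝ}
    {v : EuclideanSpace ℝ (Fin 2)} (hv : ‖v‖ ≤ κ * r) :
    ENNReal.ofReal (rexp (-((κ + η) ^ 2 / 2)) * η ^ 2 / 2 / n) ≤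
      gaussianPlane (r ^ 2 / n) (Metric.closedBall ((n : ℝ)⁻¹ • v) (η * r / n)) := by
  have farthest_point : ‖(n : ℝ)⁻¹ • v‖ + η * r / n ≤ (κ + η) * r / n := by
    rw [norm_smul, norm_inv, RCLike.norm_natCast, ← div_eq_inv_mul, ← add_div, add_mul]
    gcongr
  have exponent_le :
      -((κ + η) ^ 2 / 2) ≤ -((κ + η) * r / n) ^ 2 / (2 * (r ^ 2 / n)) :=
    calc -((κ + η) ^ 2 / 2) ≤ -((κ + η) ^ 2 / 2 / n) :=
          neg_le_neg (div_le_self (by positivity) (mod_cast hn))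
      _ = -((κ + η) * r / n) ^ 2 / (2 * (r ^ 2 / n)) := by field_simp
  calc ENNReal.ofReal (rexp (-((κ + η) ^ 2 / 2)) * η ^ 2 / 2 / n)
      = ENNReal.ofReal (rexp (-((κ + η) ^ 2 / 2)) * (η * r / n) ^ 2 / (2 * (r ^ 2 / n))) := by
        congr 1
        field_simp
    _ ≤ ENNReal.ofReal (rexp (-((κ + η) * r / n) ^ 2 / (2 * (r ^ 2 / n))) * (η * r / n) ^ 2 /
          (2 * (r ^ 2 / n))) := by gcongr
    _ ≤ gaussianPlane (r ^ 2 / n) (Metric.closedBall ((n : ℝ)⁻¹ • v) (η * r / n)) :=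
        le_gaussianPlane_closedBall (by positivity) (by positivity) farthest_point

theorem natCast_mul_tsum_gaussianPlane_le_of_diffusive (hr : 0 < r) (hη : 0 < η) (hn : 0 < n)
    {K : ℝ} (hK : 0 < K) (hnK : 3584 / (η ^ 6 * K) ≤ n) :
    n * ∑' m : ℕ, 2 ^ m * gaussianPlane (r ^ 2 / n / 2 ^ m) {z | η * r * (7 / 8) ^ m < ‖z‖} ≤
      ENNReal.ofReal (K / n) / 2 :=
  calc n * ∑' m : ℕ, 2 ^ m * gaussianPlane (r ^ 2 / n / 2 ^ m) {z | η * r * (7 / 8) ^ m < ‖z‖}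
      ≤ n * ENNReal.ofReal (28 * (4 * (r ^ 2 / n) / (η * r) ^ 2) ^ 3) := by
        gcongr
        exact tsum_two_pow_mul_gaussianPlane_lt_norm_le (by positivity) (by positivity)
    -- `3584 = 2 * 28 * 4 ^ 3`
    _ = ENNReal.ofReal (3584 / (η ^ 6 * K) * (K / (2 * n ^ 2))) := by
        rw [← ENNReal.ofReal_natCast, ← ENNReal.ofReal_mul (by positivity)]
        congr 1
        field_simp
        norm_num
    _ ≤ ENNReal.ofReal (n * (K / (2 * n ^ 2))) := by gcongr
    _ = ENNReal.ofReal (K / n) / 2 := by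
        rw [← ENNReal.ofReal_ofNat, ← ENNReal.ofReal_div_of_pos two_pos]
        congr 1
        field_simp

theorem HasStationaryIndepIncrements.le_measure_gridControlled_of_diffusive {Ω : Type*}
    {mΩ : MeasurableSpace Ω} {P : Measure Ω} [IsFiniteMeasure P]
    {X : ℝ → Ω → EuclideanSpace ℝ (Fin 2)}
    (hX : HasStationaryIndepIncrements X gaussianPlane P) (hr : 0 < r) (hη : 0 < η) (hn : 0 < n)
    {A : Set (EuclideanSpace ℝ (Fin 2))} (hA : MeasurableSet A) {K : ℝ} (hK : 0 < K)
    (hAK : ENNReal.ofReal (K / n) ≤ gaussianPlane (r ^ 2 / n) A)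
    (hnK : 3584 / (η ^ 6 * K) ≤ n) :
    ENNReal.ofReal ((K / n) ^ n / 2) ≤
      P {ω | GridControlled (r ^ 2 / n) n A (fun m ↦ η * r * (7 / 8) ^ m) (X · ω)} :=
  calc ENNReal.ofReal ((K / n) ^ n / 2)
      = ENNReal.ofReal (K / n) ^ n / 2 := by
        rw [ENNReal.ofReal_div_of_pos two_pos, ENNReal.ofReal_ofNat,
          ENNReal.ofReal_pow (by positivity)]
    _ ≤ gaussianPlane (r ^ 2 / n) A ^ n / 2 := by gcongr
    _ ≤ P {ω | GridControlled (r ^ 2 / n) n A (fun m ↦ η * r * (7 / 8) ^ m) (X · ω)} :=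
        hX.le_measure_gridControlled (by positivity) hA hn <|
          (natCast_mul_tsum_gaussianPlane_le_of_diffusive hr hη hn hK hnK).trans (by gcongr)

end DiffusiveScale

/-- The tube event itself need not be measurable with respect to the σ-algebra of `W`, since the
paths are only almost surely continuous; `G` is a measurable substitute. -/
theorem IsPlanarBM.exists_measurableSet_tube (κ : ℝ) {γ : ℝ} (hγ : 0 < γ) :
    ∃ c : ℝ, 0 < c ∧ ∀ (Ω : Type*) (_ : MeasureSpace Ω) (_ : IsProbabilityMeasure (ℙ : Measure Ω))
      (W : ℝ → Ω → EuclideanSpace ℝ (Fin 2)), IsPlanarBM W →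
      ∀ r : ℝ, 0 < r → ∀ v : EuclideanSpace ℝ (Fin 2), ‖v‖ ≤ κ * r →
      ∃ G : Set Ω, MeasurableSet[⨆ t : ℝ, MeasurableSpace.comap (W t) inferInstance] G ∧
        ENNReal.ofReal c ≤ ℙ G ∧ ∀ᵐ ω : Ω, ω ∈ G →
          ∀ t ∈ Set.Icc (0 : ℝ) (r ^ 2), ‖W t ω - (t / r ^ 2) • v‖ ≤ γ * r := by
  obtain ⟨η, hη, rfl⟩ : ∃ η, 0 < η ∧ γ = 10 * η := ⟨γ / 10, by positivity, by ring⟩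
  obtain ⟨K, hK, K_pos⟩ : ∃ K, K = rexp (-((κ + η) ^ 2 / 2)) * η ^ 2 / 2 ∧ 0 < K :=
    ⟨_, rfl, by positivity⟩
  obtain ⟨n, hn⟩ := exists_nat_ge (max 1 (max (κ / η) (3584 / (η ^ 6 * K))))
  simp only [max_le_iff, Nat.one_le_cast, div_le_iff₀ hη] at hn
  obtain ⟨n_pos, drift_le, tail_le⟩ := hn
  refine ⟨(K / n) ^ n / 2, by positivity, fun Ω _ _ W hW r hr v hv ↦ ?_⟩
  refine ⟨{ω | GridControlled (r ^ 2 / n) n (Metric.closedBall ((n : ℝ)⁻¹ • v) (η * r / n))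
    (fun m ↦ η * r * (7 / 8) ^ m) (W · ω)}, ?_, ?_, ?_⟩
  · have generated (t : ℝ) :
        Measurable[⨆ t : ℝ, MeasurableSpace.comap (W t) inferInstance] (W t) :=
      measurable_iff_comap_le.2 (le_iSup (fun t ↦ MeasurableSpace.comap (W t) inferInstance) t)
    exact measurableSet_gridControlled (mΩ := _) generated
      Metric.isClosed_closedBall.measurableSet _ _ _
  · exact hW.hasStationaryIndepIncrements.le_measure_gridControlled_of_diffusive hr hη n_pos
      Metric.isClosed_closedBall.measurableSet K_pos
      (hK ▸ le_gaussianPlane_closedBall_of_diffusive hr hη n_pos hv) tail_le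
  · filter_upwards [hW.init, hW.cont] with ω hinit hcont hω t ht
    refine hω.norm_sub_smul_le_of_diffusive hcont hinit hr hη n_pos ?_ ht
    calc ‖v‖ ≤ κ * r := hv
      _ ≤ n * η * r := by gcongr
      _ = η * r * n := by ring

section Exponential

variable {ρ x y : ℝ}

theorem expMeasure_Iic (hρ : 0 < ρ) (hx : 0 ≤ x) :
    expMeasure ρ (Set.Iic x) = ENNReal.ofReal (1 - rexp (-(ρ * x))) := by
  have := isProbabilityMeasure_expMeasure hρ
  rw [← ofReal_cdf, cdf_expMeasure_eq hρ, if_pos hx]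

theorem expMeasure_Iio (hρ : 0 < ρ) (hx : 0 ≤ x) :
    expMeasure ρ (Set.Iio x) = ENNReal.ofReal (1 - rexp (-(ρ * x))) := by
  have no_atom : expMeasure ρ {x} = 0 := withDensity_absolutelyContinuous _ _ (measure_singleton x)
  rw [measure_congr (Iio_ae_eq_Iic' no_atom), expMeasure_Iic hρ hx]

theorem expMeasure_Ioi (hρ : 0 < ρ) (hx : 0 ≤ x) :
    expMeasure ρ (Set.Ioi x) = ENNReal.ofReal (rexp (-(ρ * x))) := by
  have := isProbabilityMeasure_expMeasure hρ
  have exp_le_one : rexp (-(ρ * x)) ≤ 1 := Real.exp_le_one_iff.2 (neg_nonpos.2 (by positivity))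
  rw [← Set.compl_Iic, prob_compl_eq_one_sub measurableSet_Iic, expMeasure_Iic hρ hx,
    ← ENNReal.ofReal_one, ← ENNReal.ofReal_sub _ (by linarith), sub_sub_cancel]

theorem mul_exp_neg_le_one_sub_exp_neg (x : ℝ) : x * rexp (-x) ≤ 1 - rexp (-x) := by
  have := mul_le_mul_of_nonneg_right (Real.add_one_le_exp x) (Real.exp_nonneg (-x))
  rw [← Real.exp_add, add_neg_cancel, Real.exp_zero] at this
  linarith

theorem le_expMeasure_Iio (hρ : 0 < ρ) (hx : 0 ≤ x) (hy : ρ * x ≤ y) :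
    ENNReal.ofReal (ρ * x * rexp (-y)) ≤ expMeasure ρ (Set.Iio x) := by
  rw [expMeasure_Iio hρ hx]
  refine ENNReal.ofReal_le_ofReal (le_trans ?_ (mul_exp_neg_le_one_sub_exp_neg (ρ * x)))
  gcongr

theorem le_expMeasure_Ioi (hρ : 0 < ρ) (hx : 0 ≤ x) (hy : ρ * x ≤ y) :
    ENNReal.ofReal (rexp (-y)) ≤ expMeasure ρ (Set.Ioi x) := by
  rw [expMeasure_Ioi hρ hx]
  gcongr

end Exponential

theorem measure_inter_inter_of_iIndep {Ω : Type*} {mΩ : MeasurableSpace Ω} {P : Measure Ω}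
    {m₁ m₂ m₃ : MeasurableSpace Ω} (hindep : iIndep ![m₁, m₂, m₃] P) {A B C : Set Ω}
    (hA : MeasurableSet[m₁] A) (hB : MeasurableSet[m₂] B) (hC : MeasurableSet[m₃] C) :
    P (A ∩ B ∩ C) = P A * P B * P C := by
  have events_measurable : ∀ i, MeasurableSet[![m₁, m₂, m₃] i] (![A, B, C] i) :=
    Fin.forall_fin_succ.2 ⟨hA, Fin.forall_fin_two.2 ⟨hB, hC⟩⟩
  have inter_eq : ⋂ i, ![A, B, C] i = A ∩ B ∩ C := by
    ext
    simp [Fin.forall_fin_succ, and_assoc]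
  rw [← inter_eq, hindep.meas_iInter events_measurable, Fin.prod_univ_three]
  rfl

theorem stmt_5_general {α β γ : ℝ} (hα : 0 < α) (hβ : 0 < β) (hγ : 0 < γ) (κ M : ℝ) :
    ∃ c : ℝ, 0 < c ∧
      ∀ (Ω : Type*) (_ : MeasureSpace Ω) (_ : IsProbabilityMeasure (ℙ : Measure Ω))
        (W : ℝ → Ω → EuclideanSpace ℝ (Fin 2)) (E₁ E₂ : Ω → ℝ),
        IsPlanarBM W →
        ∀ ρ₁ ρ₂ : ℝ, 0 < ρ₁ → 0 < ρ₂ →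
        HasLaw E₁ (expMeasure ρ₁) → HasLaw E₂ (expMeasure ρ₂) →
        iIndep
          ![⨆ t : ℝ, MeasurableSpace.comap (W t) inferInstance,
            MeasurableSpace.comap E₁ inferInstance,
            MeasurableSpace.comap E₂ inferInstance] ℙ →
        ∀ r : ℝ, 0 < r → ρ₁ * r ≤ M → ρ₂ * r ≤ M →
        ∀ v : EuclideanSpace ℝ (Fin 2), ‖v‖ ≤ κ * r →
        ENNReal.ofReal (c * r * ρ₁) ≤
          ℙ {ω | E₁ ω < α * r ∧ β * r < E₂ ω ∧
              ∀ t ∈ Set.Icc (0 : ℝ) (r ^ 2), ‖W t ω - (t / r ^ 2) • v‖ ≤ γ * r} := by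
  obtain ⟨c, hc, htube⟩ := IsPlanarBM.exists_measurableSet_tube κ hγ
  refine ⟨c * (α * rexp (-(α * M))) * rexp (-(β * M)), by positivity, ?_⟩
  intro Ω _ _ W E₁ E₂ hW ρ₁ ρ₂ hρ₁ hρ₂ hE₁ hE₂ hindep r hr hM₁ hM₂ v hv
  obtain ⟨G, G_measurable, G_mass, G_tube⟩ := htube Ω _ inferInstance W hW r hr v hv
  have E₁_mass : ENNReal.ofReal (ρ₁ * (α * r) * rexp (-(α * M))) ≤ ℙ (E₁ ⁻¹' Set.Iio (α * r)) :=
    (le_expMeasure_Iio hρ₁ (by positivity) (by rw [mul_left_comm]; gcongr)).trans_eq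
      (hE₁.measure_eq measurableSet_Iio).symm
  have E₂_mass : ENNReal.ofReal (rexp (-(β * M))) ≤ ℙ (E₂ ⁻¹' Set.Ioi (β * r)) :=
    (le_expMeasure_Ioi hρ₂ (by positivity) (by rw [mul_left_comm]; gcongr)).trans_eq
      (hE₂.measure_eq measurableSet_Ioi).symm
  calc ENNReal.ofReal (c * (α * rexp (-(α * M))) * rexp (-(β * M)) * r * ρ₁)
      = ENNReal.ofReal c * ENNReal.ofReal (ρ₁ * (α * r) * rexp (-(α * M))) *
          ENNReal.ofReal (rexp (-(β * M))) := by
        rw [← ENNReal.ofReal_mul (by positivity), ← ENNReal.ofReal_mul (by positivity)]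
        congr 1
        ring
    _ ≤ ℙ G * ℙ (E₁ ⁻¹' Set.Iio (α * r)) * ℙ (E₂ ⁻¹' Set.Ioi (β * r)) := by gcongr
    _ = ℙ (G ∩ E₁ ⁻¹' Set.Iio (α * r) ∩ E₂ ⁻¹' Set.Ioi (β * r)) :=
        (measure_inter_inter_of_iIndep hindep G_measurable ⟨_, measurableSet_Iio, rfl⟩
          ⟨_, measurableSet_Ioi, rfl⟩).symm
    _ ≤ _ := measure_mono_ae <| by
        filter_upwards [G_tube] with ω hω ⟨⟨hG, h₁⟩, h₂⟩ using ⟨h₁, h₂, hω hG⟩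

theorem stmt_5 (α β γ : ℝ) (hα : 0 < α) (hβ : 0 < β) (hγ : 0 < γ) :
    ∃ c : ℝ, 0 < c ∧
      ∀ (lmin lmax : ℝ), 0 < lmin → lmin ≤ lmax →
      ∀ (Ω : Type) (_ : MeasureSpace Ω) (_ : IsProbabilityMeasure (ℙ : Measure Ω))
        (W : ℝ → Ω → EuclideanSpace ℝ (Fin 2)) (E₁ E₂ : Ω → ℝ),
        IsPlanarBM W → Measurable E₁ → Measurable E₂ →
        ∀ ρ₁ ρ₂ : ℝ, lmin ≤ ρ₁ → ρ₁ ≤ lmax → lmin ≤ ρ₂ → ρ₂ ≤ lmax →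
        Measure.map E₁ ℙ = ProbabilityTheory.expMeasure ρ₁ →
        Measure.map E₂ ℙ = ProbabilityTheory.expMeasure ρ₂ →
        iIndep
          ![⨆ t : ℝ, MeasurableSpace.comap (W t) inferInstance,
            MeasurableSpace.comap E₁ inferInstance,
            MeasurableSpace.comap E₂ inferInstance] ℙ →
        ∀ r : ℝ, 0 < r → lmax * r ≤ 1 →
        ∀ v : EuclideanSpace ℝ (Fin 2), ‖v‖ ≤ 4 / 5 * r →
        ENNReal.ofReal (c * r * lmin) ≤
          ℙ {ω | E₁ ω < α * r ∧ β * r < E₂ ω ∧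
              ∀ t ∈ Set.Icc (0 : ℝ) (r ^ 2), ‖W t ω - (t / r ^ 2) • v‖ ≤ γ * r} := by
  obtain ⟨c, hc, hprob⟩ := stmt_5_general hα hβ hγ (4 / 5) 1
  refine ⟨c, hc, fun lmin lmax hmin _ Ω _ _ W E₁ E₂ hW hE₁ hE₂ ρ₁ ρ₂ hρ₁ hρ₁' hρ₂ hρ₂' hlaw₁ hlaw₂
    hindep r hr hr1 v hv ↦ le_trans (by gcongr) <| hprob Ω _ inferInstance W E₁ E₂ hW ρ₁ ρ₂
      (hmin.trans_le hρ₁) (hmin.trans_le hρ₂) ⟨hE₁.aemeasurable, hlaw₁⟩ ⟨hE₂.aemeasurable, hlaw₂⟩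
      hindep r hr (le_trans (by gcongr) hr1) (le_trans (by gcongr) hr1) v hv⟩
end
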